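/- For every integer n ≥ 0, the fourth symmetrized rank moment satisfies η₄(25n+24) ≡ 0 (mod 5). -/

import Mathlib

/-- The rank of a partition: its largest part minus its number of parts. -/
def partitionRank {n : ℕ} (P : Nat.Partition n) : ℤ :=
  (P.parts.sup : ℤ) - (P.parts.card : ℤ)

/-- `N(m,n)`: the number of partitions of `n` with rank `m`. -/
noncomputable def rankCount (m : ℤ) (n : ℕ) : ℕ :=
  Nat.card {P : Nat.Partition n // partitionRank P = m}

/-- The generalized binomial coefficient `C(x,k) = x(x-1)⋯(x-k+1)/k!` for an integer `x`. -/
def intChoose (x : ℤ) (k : ℕ) : ℤ :=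
  (∏ i ∈ Finset.range k, (x - (i : ℤ))) / (Nat.factorial k : ℤ)

/-- The fourth symmetrized rank moment `η₄(n) = Σ_{m∈ℤ} C(m+1,4)·N(m,n)`. -/
noncomputable def eta4 (n : ℕ) : ℤ :=
  ∑ᶠ m : ℤ, intChoose (m + 1) 4 * (rankCount m n : ℤ)

section Eta4Proof
open PowerSeries Finset

namespace Eta4

instance fact5 : Fact (Nat.Prime 5) := ⟨by norm_num⟩

abbrev PS := PowerSeries (ZMod 5)

/-- congruence modulo `X^L`. -/
def Cg (L : ℕ) (f g : PS) : Prop := (X : PS) ^ L ∣ f - g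

theorem Cg.refl (L : ℕ) (f : PS) : Cg L f f := by simp [Cg]
theorem Cg.symm {L : ℕ} {f g : PS} (h : Cg L f g) : Cg L g f := by
  unfold Cg at *; rw [← neg_sub]; exact (dvd_neg).2 h
theorem Cg.trans {L : ℕ} {f g k : PS} (h : Cg L f g) (h' : Cg L g k) : Cg L f k := by
  unfold Cg at *; have := dvd_add h h'; simpa using this
theorem Cg.add {L : ℕ} {f g f' g' : PS} (h : Cg L f g) (h' : Cg L f' g') :
    Cg L (f + f') (g + g') := by
  unfold Cg at *; have := dvd_add h h'; convert this using 1; ring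
theorem Cg.neg {L : ℕ} {f g : PS} (h : Cg L f g) : Cg L (-f) (-g) := by
  unfold Cg at *; rw [← dvd_neg]; convert h using 1; ring
theorem Cg.sub {L : ℕ} {f g f' g' : PS} (h : Cg L f g) (h' : Cg L f' g') :
    Cg L (f - f') (g - g') := by
  rw [sub_eq_add_neg, sub_eq_add_neg]; exact h.add h'.neg
theorem Cg.mul_left {L : ℕ} {f g : PS} (k : PS) (h : Cg L f g) : Cg L (k * f) (k * g) := by
  unfold Cg at *; rw [← mul_sub]; exact dvd_mul_of_dvd_right h k
theorem Cg.mul {L : ℕ} {f g f' g' : PS} (h : Cg L f g) (h' : Cg L f' g') :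
    Cg L (f * f') (g * g') := by
  have h1 := h'.mul_left f
  have h2 := h.mul_left g'
  rw [mul_comm g' f, mul_comm g' g] at h2
  exact h1.trans h2
theorem Cg.mono {L M : ℕ} {f g : PS} (h : Cg L f g) (hM : M ≤ L) : Cg M f g :=
  dvd_trans (pow_dvd_pow _ hM) h
theorem Cg.sum {ι : Type*} {L : ℕ} (s : Finset ι) {f g : ι → PS}
    (h : ∀ i ∈ s, Cg L (f i) (g i)) : Cg L (∑ i ∈ s, f i) (∑ i ∈ s, g i) := by
  unfold Cg at *; rw [← Finset.sum_sub_distrib]; exact Finset.dvd_sum h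
theorem Cg.pow {L : ℕ} {f g : PS} (h : Cg L f g) (n : ℕ) : Cg L (f ^ n) (g ^ n) := by
  induction n with
  | zero => simpa using Cg.refl L 1
  | succ n ih => rw [pow_succ, pow_succ]; exact ih.mul h
theorem Cg.of_dvd {L : ℕ} {f : PS} (h : X ^ L ∣ f) : Cg L f 0 := by simpa [Cg] using h
theorem Cg.shift {L e M : ℕ} {k f g : PS} (hk : X ^ e ∣ k) (h : Cg L f g) (hM : M ≤ e + L) :
    Cg M (k * f) (k * g) := by
  unfold Cg at *
  rw [← mul_sub]
  exact dvd_trans (pow_dvd_pow _ hM) (by rw [pow_add]; exact mul_dvd_mul hk h)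
theorem Cg.coeff {L : ℕ} {f g : PS} (h : Cg L f g) {n : ℕ} (hn : n < L) :
    coeff n f = coeff n g := by
  have := (X_pow_dvd_iff.1 h) n hn
  rw [map_sub, sub_eq_zero] at this; exact this
theorem Cg.of_coeff {L : ℕ} {f g : PS} (h : ∀ n < L, PowerSeries.coeff n f = PowerSeries.coeff n g) :
    Cg L f g := by
  refine X_pow_dvd_iff.2 fun m hm => ?_
  rw [map_sub, h m hm, sub_self]
theorem eq_of_cg {f g : PS} (h : ∀ L, Cg L f g) : f = g := by
  ext n; exact (h (n + 1)).coeff (Nat.lt_succ_self n)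
theorem eq_of_cg_large {f g : PS} (h : ∀ L, ∃ M, L ≤ M ∧ Cg M f g) : f = g :=
  eq_of_cg fun L => by obtain ⟨M, h1, h2⟩ := h L; exact h2.mono h1

theorem Cg.expand {L : ℕ} {f g : PS} (h : Cg L f g) :
    Cg (5 * L) (PowerSeries.expand 5 (by norm_num) f) (PowerSeries.expand 5 (by norm_num) g) := by
  unfold Cg at *
  obtain ⟨k, hk⟩ := h
  refine ⟨PowerSeries.expand 5 (by norm_num) k, ?_⟩
  rw [← map_sub, hk, map_mul, map_pow, expand_X, ← pow_mul]

/-- expansion `q ↦ q^5`. -/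
noncomputable abbrev ex : PS →ₐ[ZMod 5] PS := PowerSeries.expand 5 (by norm_num)

theorem ex_X : ex X = X ^ 5 := expand_X 5 (by norm_num)

/-- Formal infinite sum. -/
noncomputable def psum (f : ℕ → PS) : PS := PowerSeries.mk fun n => coeff n (∑ m ∈ range (n + 1), f m)

theorem psum_cg {f : ℕ → PS} (hf : ∀ m, X ^ m ∣ f m) {L M : ℕ} (h : L ≤ M) :
    Cg L (psum f) (∑ m ∈ range M, f m) := by
  refine Cg.of_coeff fun n hn => ?_
  rw [psum, coeff_mk, map_sum, map_sum]
  refine Finset.sum_subset (by intro x; simp; omega) fun x _ hx => ?_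
  simp at hx
  exact X_pow_dvd_iff.1 (hf x) n (by omega)

/-- finite product. -/
noncomputable def fp (d c m : ℕ) : PS := ∏ t ∈ range m, (1 - X ^ (d * t + c))
/-- infinite product. -/
noncomputable def AP (d c : ℕ) : PS := PowerSeries.mk fun n => coeff n (fp d c (n + 1))

theorem fp_succ (d c m : ℕ) : fp d c (m + 1) = fp d c m * (1 - X ^ (d * m + c)) := by
  simp [fp, Finset.prod_range_succ]
theorem fp_zero (d c : ℕ) : fp d c 0 = 1 := by simp [fp]
theorem fp_succ' (d c m : ℕ) : fp d c (m + 1) = (1 - X ^ c) * fp d (c + d) m := by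
  simp only [fp, Finset.prod_range_succ', mul_comm]
  simp only [mul_zero, zero_add]
  congr 1
  refine Finset.prod_congr rfl fun t _ => ?_
  congr 2; ring

theorem fp_cg {d c m m' : ℕ} (hd : 1 ≤ d) (h : m ≤ m') : Cg m (fp d c m') (fp d c m) := by
  induction m', h using Nat.le_induction with
  | base => exact Cg.refl _ _
  | succ k hk ih =>
    refine Cg.trans ?_ ih
    rw [fp_succ]
    unfold Cg
    refine ⟨-(fp d c k) * X ^ (d * k + c - m), ?_⟩
    have : d * k + c = m + (d * k + c - m) := by
      have : k ≤ d * k := Nat.le_mul_of_pos_left k hd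
      omega
    conv_lhs => rw [this, pow_add]
    ring

theorem AP_cg {d c : ℕ} (hd : 1 ≤ d) (m : ℕ) : Cg m (AP d c) (fp d c m) := by
  refine Cg.of_coeff fun n hn => ?_
  rw [AP, coeff_mk]
  exact ((fp_cg hd (Nat.succ_le_of_lt hn)).coeff (Nat.lt_succ_self n)).symm

theorem cc_one_sub {k : ℕ} (hk : k ≠ 0) : constantCoeff (1 - X ^ k : PS) = 1 := by
  simp [hk]
theorem cc_fp {d c : ℕ} (hc : c ≠ 0) (m : ℕ) : constantCoeff (fp d c m) = 1 := by
  rw [fp, map_prod]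
  exact Finset.prod_eq_one fun t _ => cc_one_sub (by omega)
theorem cc_AP {d c : ℕ} (hc : c ≠ 0) : constantCoeff (AP d c) = 1 := by
  rw [← coeff_zero_eq_constantCoeff_apply, AP, coeff_mk, coeff_zero_eq_constantCoeff_apply, cc_fp hc]
theorem ne_zero_of_cc {f : PS} (h : constantCoeff f = 1) : f ≠ 0 := by
  rintro rfl; simp at h
theorem mul_inv_of_cc {f : PS} (h : constantCoeff f = 1) : f * f⁻¹ = 1 :=
  PowerSeries.mul_inv_cancel _ (by rw [h]; exact one_ne_zero)
theorem inv_mul_of_cc {f : PS} (h : constantCoeff f = 1) : f⁻¹ * f = 1 := by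
  rw [mul_comm]; exact mul_inv_of_cc h

theorem Cg.inv_right {L : ℕ} {f g : PS} (h : Cg L f g) (hg : constantCoeff g = 1) :
    Cg L (f * g⁻¹) 1 := by
  have := h.mul (Cg.refl L g⁻¹)
  rwa [mul_inv_of_cc hg] at this

theorem AP_inv_fp {d c : ℕ} (hd : 1 ≤ d) (hc : c ≠ 0) {L m : ℕ} (h : L ≤ m) :
    Cg L (AP d c * (fp d c m)⁻¹) 1 :=
  ((AP_cg hd m).mono h).inv_right (cc_fp hc m)

theorem penta_eq : pentagonalSeries (ZMod 5) = AP 1 1 := by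
  ext n
  obtain ⟨s, hs⟩ := Filter.eventually_atTop.1 (coeff_prod_one_sub_X_pow_eventually_eq (ZMod 5) n)
  obtain ⟨M, hM⟩ := s.exists_nat_subset_range
  have h1 := hs (range (M + (n + 1))) (hM.trans (by intro x; simp; omega))
  rw [← h1, AP, coeff_mk]
  have := (fp_cg (d := 1) (c := 1) (m := n + 1) (m' := M + (n + 1)) le_rfl (by omega)).coeff
    (Nat.lt_succ_self n)
  rw [← this]
  simp [fp]

theorem ex_fp (d c m : ℕ) : ex (fp d c m) = fp (5 * d) (5 * c) m := by
  simp only [fp, map_prod, map_sub, map_one, map_pow, ex_X]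
  refine Finset.prod_congr rfl fun t _ => ?_
  rw [← pow_mul]; congr 2; ring

theorem ex_AP {d c : ℕ} (hd : 1 ≤ d) : ex (AP d c) = AP (5 * d) (5 * c) := by
  refine eq_of_cg fun L => ?_
  have h1 := (AP_cg (c := c) hd L).expand.mono (show L ≤ 5 * L by omega)
  have h2 := AP_cg (d := 5 * d) (c := 5 * c) (by omega) L
  rw [← ex_fp] at h2
  exact h1.trans h2.symm

theorem ex_inv {f : PS} (h : constantCoeff f = 1) : ex (f⁻¹) = (ex f)⁻¹ := by
  have h2 : constantCoeff (ex f) = 1 := by rw [constantCoeff_expand, h]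
  have h3 : ex f * ex f⁻¹ = 1 := by rw [← map_mul, mul_inv_of_cc h, map_one]
  calc ex (f⁻¹) = (ex f)⁻¹ * ex f * ex f⁻¹ := by rw [inv_mul_of_cc h2, one_mul]
    _ = _ := by rw [mul_assoc, h3, mul_one]

end Eta4

namespace Eta4

def dF (b : ℕ) (M : Multiset ℕ) : Multiset ℕ := (b ::ₘ M.map (· - 1)).filter (· ≠ 0)
def dG (b l : ℕ) (M : Multiset ℕ) : Multiset ℕ :=
  (M.erase b).map (· + 1) + Multiset.replicate (l - (M.erase b).card) 1

theorem sum_filter_ne (M : Multiset ℕ) : (M.filter (· ≠ 0)).sum = M.sum := by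
  induction M using Multiset.induction_on with
  | empty => simp
  | cons a s ih =>
    by_cases h : a = 0
    · simp [h]; simpa using ih
    · rw [Multiset.filter_cons_of_pos (p := (· ≠ 0)) _ h]; simp; simpa using ih

theorem sum_map_pred (M : Multiset ℕ) (h : 0 ∉ M) : (M.map (· - 1)).sum + M.card = M.sum := by
  induction M using Multiset.induction_on with
  | empty => simp
  | cons a s ih =>
    simp at h
    have := ih h.2
    simp at this ⊢
    omega

theorem sum_map_succ (M : Multiset ℕ) : (M.map (· + 1)).sum = M.sum + M.card := by
  induction M using Multiset.induction_on with
  | empty => simp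
  | cons a s ih => simp at ih ⊢; omega

theorem dF_zero (b : ℕ) (M : Multiset ℕ) : 0 ∉ dF b M := by simp [dF]

theorem dF_sum (b : ℕ) (M : Multiset ℕ) (h : 0 ∉ M) : (dF b M).sum + M.card = b + M.sum := by
  rw [dF, sum_filter_ne, Multiset.sum_cons, add_assoc, sum_map_pred M h]

theorem dF_sup (b : ℕ) (M : Multiset ℕ) (h : M.sup ≤ b + 1) : (dF b M).sup = b := by
  apply le_antisymm
  · rw [Multiset.sup_le]
    intro x hx
    simp [dF] at hx
    rcases hx.1 with rfl | ⟨y, hy, rfl⟩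
    · exact le_rfl
    · have := (Multiset.sup_le.1 h) y hy
      omega
  · by_cases hb : b = 0
    · omega
    · exact Multiset.le_sup (by simp [dF, hb])

theorem dF_card (b : ℕ) (M : Multiset ℕ) : (dF b M).card ≤ M.card + 1 := by
  refine (Multiset.card_le_card (Multiset.filter_le _ _)).trans ?_
  simp

theorem sup_mem (M : Multiset ℕ) (h : M ≠ 0) : M.sup ∈ M := by
  induction M using Multiset.induction_on with
  | empty => simp at h
  | cons a s ih =>
    by_cases hs : s = 0
    · subst hs; simp
    · have := ih hs
      rw [Multiset.sup_cons]
      rcases le_total a s.sup with h1 | h1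
      · rw [sup_eq_right.2 h1]; exact Multiset.mem_cons_of_mem this
      · rw [sup_eq_left.2 h1]; simp

theorem dG_card (b l : ℕ) (M : Multiset ℕ) (h : (M.erase b).card ≤ l) : (dG b l M).card = l := by
  simp only [dG, Multiset.card_add, Multiset.card_map, Multiset.card_replicate]; omega

theorem dG_sum (b l : ℕ) (M : Multiset ℕ) (h : (M.erase b).card ≤ l) :
    (dG b l M).sum = (M.erase b).sum + l := by
  simp only [dG, Multiset.sum_add, sum_map_succ, Multiset.sum_replicate]; simp; omega

theorem dG_zero (b l : ℕ) (M : Multiset ℕ) : 0 ∉ dG b l M := by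
  simp [dG, Multiset.mem_replicate]

theorem dG_sup (b l : ℕ) (M : Multiset ℕ) (h : M.sup ≤ b) : (dG b l M).sup ≤ b + 1 := by
  rw [Multiset.sup_le]
  intro x hx
  simp only [dG, Multiset.mem_add, Multiset.mem_map, Multiset.mem_replicate] at hx
  rcases hx with ⟨y, hy, rfl⟩ | ⟨_, rfl⟩
  · have := (Multiset.sup_le.1 h) y (Multiset.mem_of_mem_erase hy)
    omega
  · omega

theorem dG_aux (M : Multiset ℕ) (h : 0 ∉ M) :
    (((M.map (· - 1)).filter (· ≠ 0)).map (· + 1)) +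
      Multiset.replicate (M.card - ((M.map (· - 1)).filter (· ≠ 0)).card) 1 = M := by
  induction M using Multiset.induction_on with
  | empty => simp
  | cons a s ih =>
    simp only [Multiset.mem_cons, not_or] at h
    have h1 := ih h.2
    have hc : ((s.map (· - 1)).filter (· ≠ 0)).card ≤ s.card :=
      (Multiset.card_le_card (Multiset.filter_le _ _)).trans (by simp)
    by_cases ha : a = 1
    · subst ha
      rw [Multiset.map_cons, Multiset.filter_cons_of_neg _ (by simp), Multiset.card_cons,
        Nat.succ_sub hc, Multiset.replicate_succ, Multiset.add_cons, h1]
    · have h0 : a - 1 ≠ 0 := by omega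
      rw [Multiset.map_cons, Multiset.filter_cons_of_pos (p := (· ≠ 0)) _ h0, Multiset.card_cons,
        Multiset.card_cons, Nat.add_sub_add_right, Multiset.map_cons, Multiset.cons_add, h1]
      congr 1; omega

theorem dG_dF (b : ℕ) (M : Multiset ℕ) (h : 0 ∉ M) : dG b M.card (dF b M) = M := by
  have : (dF b M).erase b = (M.map (· - 1)).filter (· ≠ 0) := by
    unfold dF
    by_cases hb : b = 0
    · subst hb
      rw [Multiset.filter_cons_of_neg _ (by simp)]
      exact Multiset.erase_of_notMem (by simp)
    · rw [Multiset.filter_cons_of_pos (p := (· ≠ 0)) _ hb, Multiset.erase_cons_head]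
  rw [dG, this]
  exact dG_aux M h

theorem dF_dG (l : ℕ) (M : Multiset ℕ) (h : 0 ∉ M) : dF M.sup (dG M.sup l M) = M := by
  unfold dF dG
  rw [Multiset.map_add, Multiset.map_map, Multiset.map_replicate]
  have e : ((fun x => x - 1) ∘ fun x : ℕ => x + 1) = id := by ext x; simp
  rw [e, Multiset.map_id, ← Multiset.cons_add, Multiset.filter_add]
  have e2 : (Multiset.replicate (l - (M.erase M.sup).card) (1 - 1)).filter (· ≠ 0) = 0 := by
    rw [Multiset.filter_eq_nil]; intro a ha; simp [Multiset.mem_replicate] at ha; simp [ha]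
  rw [e2, add_zero]
  by_cases hM : M = 0
  · subst hM; decide
  · rw [Multiset.cons_erase (sup_mem M hM)]
    rw [Multiset.filter_eq_self]; intro a ha h0; subst h0; exact h ha

theorem parts_zero {n : ℕ} (p : n.Partition) : 0 ∉ p.parts := fun h => (p.parts_pos h).ne' rfl

theorem dyson (n n' : ℕ) (s : ℤ) (h : (n' : ℤ) = n + s) :
    (univ.filter fun p : n.Partition => partitionRank p ≤ s + 1).card =
    (univ.filter fun p : n'.Partition => s - 1 ≤ partitionRank p).card := by
  have key1 : ∀ p : n.Partition, partitionRank p ≤ s + 1 →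
      ((((p.parts.card : ℤ) + s).toNat : ℕ) : ℤ) = p.parts.card + s ∧
      p.parts.sup ≤ ((p.parts.card : ℤ) + s).toNat + 1 := by
    intro p hp
    unfold partitionRank at hp
    have : 0 ≤ (p.parts.card : ℤ) + s := by
      by_cases h0 : p.parts = 0
      · have h1 := p.parts_sum
        rw [h0] at h1 ⊢; simp at h1 ⊢; omega
      · have := p.parts_pos (sup_mem _ h0); omega
    omega
  have key2 : ∀ p : n'.Partition, s - 1 ≤ partitionRank p →
      ((((p.parts.sup : ℤ) - s).toNat : ℕ) : ℤ) = p.parts.sup - s ∧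
      (p.parts.erase p.parts.sup).card ≤ ((p.parts.sup : ℤ) - s).toNat ∧
      (p.parts.erase p.parts.sup).sum + p.parts.sup = n' := by
    intro p hp
    unfold partitionRank at hp
    by_cases h0 : p.parts = 0
    · have h1 := p.parts_sum
      rw [h0] at h1 hp ⊢; simp at h1 hp ⊢; omega
    · have hm := sup_mem _ h0
      have h1 := Multiset.card_erase_add_one hm
      have h2 := Multiset.sum_erase hm
      rw [p.parts_sum] at h2
      omega
  refine Finset.card_bij'
    (fun p hp => ⟨dF ((p.parts.card : ℤ) + s).toNat p.parts, fun {i} hi => Nat.pos_of_ne_zero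
        fun h0 => dF_zero _ _ (h0 ▸ hi), ?_⟩)
    (fun p hp => ⟨dG p.parts.sup ((p.parts.sup : ℤ) - s).toNat p.parts,
        fun {i} hi => Nat.pos_of_ne_zero fun h0 => dG_zero _ _ _ (h0 ▸ hi), ?_⟩) ?_ ?_ ?_ ?_
  · have := key1 p (by simpa using hp)
    have h2 := dF_sum ((p.parts.card : ℤ) + s).toNat p.parts (parts_zero p)
    rw [p.parts_sum] at h2
    omega
  · have := key2 p (by simpa using hp)
    rw [dG_sum _ _ _ this.2.1]; omega
  · intro p hp
    have := key1 p (by simpa using hp)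
    rw [mem_filter]
    refine ⟨mem_univ _, ?_⟩
    unfold partitionRank
    dsimp only
    rw [dF_sup _ _ this.2]
    have := dF_card ((p.parts.card : ℤ) + s).toNat p.parts
    omega
  · intro p hp
    have := key2 p (by simpa using hp)
    rw [mem_filter]
    refine ⟨mem_univ _, ?_⟩
    unfold partitionRank
    dsimp only
    rw [dG_card _ _ _ this.2.1]
    have := dG_sup p.parts.sup ((p.parts.sup : ℤ) - s).toNat p.parts le_rfl
    omega
  · intro p hp
    have := key1 p (by simpa using hp)
    ext1
    simp only
    rw [dF_sup _ _ this.2]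
    have e : (((((p.parts.card : ℤ) + s).toNat : ℕ) : ℤ) - s).toNat = p.parts.card := by omega
    rw [e]
    exact dG_dF _ _ (parts_zero p)
  · intro p hp
    have := key2 p (by simpa using hp)
    ext1
    simp only
    rw [dG_card _ _ _ this.2.1]
    have e : (((((p.parts.sup : ℤ) - s).toNat : ℕ) : ℤ) + s).toNat = p.parts.sup := by omega
    rw [e]
    exact dF_dG _ _ (parts_zero p)

end Eta4

namespace Eta4

noncomputable def Pg : PS := PowerSeries.mk fun n => (Fintype.card (n.Partition) : ZMod 5)

open PowerSeries.WithPiTopology in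
theorem Pg_mul : Pg * AP 1 1 = 1 := by
  let _ : TopologicalSpace (ZMod 5) := ⊥
  have _ : DiscreteTopology (ZMod 5) := ⟨rfl⟩
  have h1 := Nat.Partition.hasProd_powerSeriesMk_card_restricted (ZMod 5) (fun _ => True)
  have h2 := WithPiTopology.hasProd_one_sub_X_pow (ZMod 5)
  have h3 := h1.mul h2
  have e : (PowerSeries.mk fun n ↦ ((Nat.Partition.restricted n (fun _ => True)).card : ZMod 5))
      = Pg := by
    unfold Pg Nat.Partition.restricted
    simp
  rw [e, penta_eq] at h3
  refine h3.unique ?_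
  convert! hasProd_one using 1
  ext1 b
  simp only [if_true, pow_mul]
  exact WithPiTopology.tsum_pow_mul_one_sub_of_constantCoeff_eq_zero (by simp)

def Gc (r : ℤ) (n : ℕ) : ℕ := (univ.filter fun p : n.Partition => r ≤ partitionRank p).card
def Hc (r : ℤ) (n : ℕ) : ℕ := (univ.filter fun p : n.Partition => partitionRank p ≤ r).card
noncomputable def Gz (r : ℤ) : PS := PowerSeries.mk fun n => (Gc r n : ZMod 5)
noncomputable def Hz (r : ℤ) : PS := PowerSeries.mk fun n => (Hc r n : ZMod 5)

theorem GH (r : ℤ) (n : ℕ) : Gc (r + 1) n + Hc r n = Fintype.card (n.Partition) := by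
  rw [← Finset.card_univ, Gc, Hc, ← Finset.card_filter_add_card_filter_not (s := univ)
    (fun p : n.Partition => r + 1 ≤ partitionRank p)]
  congr 2
  ext p; simp

theorem rank_bounds {n : ℕ} (p : n.Partition) : -(n : ℤ) ≤ partitionRank p ∧
    partitionRank p ≤ n ∧ (0 < n → -(n : ℤ) < partitionRank p ∧ partitionRank p < n) := by
  unfold partitionRank
  have hs := p.parts_sum
  have h1 : p.parts.card ≤ n := by
    have := sum_map_pred p.parts (parts_zero p)
    omega
  by_cases h0 : p.parts = 0
  · rw [h0] at hs ⊢; simp at hs ⊢; try omega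
  · have h2 := sup_mem _ h0
    have h3 := Multiset.le_sum_of_mem h2
    have h4 := p.parts_pos h2
    have h5 := Multiset.card_pos.2 h0
    omega

theorem Gz_rec (r : ℕ) (hr : 1 ≤ r) : Gz r = X ^ (r + 1) * (Pg - Gz (r + 3)) := by
  ext n
  rw [coeff_X_pow_mul']
  split_ifs with h
  · have h1 := dyson (n - (r + 1)) n (r + 1) (by omega)
    have h2 := GH (r + 2) (n - (r + 1))
    unfold Gc Hc at h2
    simp only [Gz, Pg, coeff_mk, map_sub]
    rw [← h2]
    unfold Gc
    have e1 : ((r : ℤ) + 1 - 1) = r := by ring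
    have e2 : ((r : ℤ) + 1 + 1) = r + 2 := by ring
    have e3 : ((r : ℤ) + 2 + 1) = r + 3 := by ring
    rw [e1, e2] at h1
    rw [e3, h1]
    push_cast
    ring
  · simp only [Gz, coeff_mk, Gc]
    rw [Finset.card_eq_zero.2, Nat.cast_zero]
    rw [Finset.filter_eq_empty_iff]
    intro p _
    have := rank_bounds p
    omega

theorem Hz_rec (r : ℕ) (hr : 1 ≤ r) : Hz (-r) = X ^ (r + 1) * (Pg - Hz (-(r + 3))) := by
  ext n
  rw [coeff_X_pow_mul']
  split_ifs with h
  · have h1 := dyson n (n - (r + 1)) (-(r + 1)) (by omega)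
    have h2 := GH (-r - 3) (n - (r + 1))
    unfold Gc Hc at h2
    simp only [Hz, Pg, coeff_mk, map_sub]
    rw [← h2]
    unfold Hc
    have e1 : (-((r : ℤ) + 1) + 1) = -r := by ring
    have e2 : (-((r : ℤ) + 1) - 1) = -r - 3 + 1 := by ring
    have e3 : (-((r : ℤ) + 3)) = -r - 3 := by ring
    rw [e1, e2] at h1
    rw [e3, h1]
    push_cast
    ring
  · simp only [Hz, coeff_mk, Hc]
    rw [Finset.card_eq_zero.2, Nat.cast_zero]
    rw [Finset.filter_eq_empty_iff]
    intro p _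
    have := rank_bounds p
    omega

/-- triangular numbers. -/
def tr : ℕ → ℕ
  | 0 => 0
  | k + 1 => tr k + (k + 1)

theorem two_tr (k : ℕ) : 2 * tr k = k * (k + 1) := by
  induction k with
  | zero => rfl
  | succ k ih => rw [tr, mul_add, ih]; ring

theorem le_tr (k : ℕ) : k ≤ tr k := by cases k <;> simp [tr]

theorem rec_sum (h : ℕ → PS) (hh : ∀ r, h r = X ^ (r + 3) * (1 - h (r + 3))) (r n : ℕ) :
    h r = ∑ k ∈ range n, (-1) ^ k * X ^ ((k + 1) * r + 3 * tr (k + 1))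
      + (-1) ^ n * X ^ (n * r + 3 * tr n) * h (r + 3 * n) := by
  induction n with
  | zero => simp [tr]
  | succ n ih =>
    rw [ih, Finset.sum_range_succ, add_assoc]
    congr 1
    rw [hh (r + 3 * n)]
    have e : (n + 1) * r + 3 * tr (n + 1) = (n * r + 3 * tr n) + (r + 3 * n + 3) := by
      rw [tr]; ring
    have e2 : r + 3 * n + 3 = r + 3 * (n + 1) := by ring
    rw [e, ← e2, pow_add _ _ (r + 3 * n + 3)]
    ring

theorem rec_cg (h : ℕ → PS) (hh : ∀ r, h r = X ^ (r + 3) * (1 - h (r + 3))) (r n : ℕ) :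
    Cg n (h r) (∑ k ∈ range n, (-1) ^ k * X ^ ((k + 1) * r + 3 * tr (k + 1))) := by
  unfold Cg
  conv_rhs => rw [rec_sum h hh r n]
  rw [add_sub_cancel_left]
  refine Dvd.dvd.mul_right (Dvd.dvd.mul_left (pow_dvd_pow _ ?_) _) _
  have := le_tr n
  omega

/-- generating function for rank congruent to 3 mod 5. -/
noncomputable def aa : PS := PowerSeries.mk fun n =>
  ((univ.filter fun p : n.Partition => partitionRank p % 5 = 3).card : ZMod 5)

theorem ind_id (x : ℤ) (J : ℕ) (h : -J ≤ x) (h' : x ≤ J) :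
    (if x % 5 = 3 then (1 : ℤ) else 0) = ∑ j ∈ range J,
      ((if (5 * j + 3 : ℤ) ≤ x then 1 else 0) - (if (5 * j + 4 : ℤ) ≤ x then 1 else 0)
       + (if x ≤ -(5 * j + 2 : ℤ) then 1 else 0) - (if x ≤ -(5 * j + 3 : ℤ) then 1 else 0)) := by
  have e : ∀ j : ℕ, ((if (5 * j + 3 : ℤ) ≤ x then 1 else 0) - (if (5 * j + 4 : ℤ) ≤ x then 1 else 0)
       + (if x ≤ -(5 * j + 2 : ℤ) then 1 else 0) - (if x ≤ -(5 * j + 3 : ℤ) then 1 else 0) : ℤ) =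
       if x = 5 * j + 3 ∨ x = -(5 * j + 2) then 1 else 0 := by
    intro j
    split_ifs <;> omega
  simp_rw [e]
  split_ifs with hx
  · symm
    rw [Finset.sum_eq_single (if 0 ≤ x then (x / 5).toNat else ((-x) / 5).toNat)]
    · rw [if_pos]
      split_ifs <;> omega
    · intro b _ hb
      rw [if_neg]
      split_ifs at hb <;> omega
    · intro hb
      exfalso
      apply hb
      rw [Finset.mem_range]
      split_ifs <;> omega
  · symm
    refine Finset.sum_eq_zero fun j _ => ?_
    rw [if_neg]
    omega

theorem aa_cg (J : ℕ) : Cg J aa (∑ j ∈ range J,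
    (Gz (5 * j + 3) - Gz (5 * j + 4) + Hz (-(5 * j + 2)) - Hz (-(5 * j + 3)))) := by
  refine Cg.of_coeff fun n hn => ?_
  rw [map_sum]
  simp only [aa, map_add, map_sub, Gz, Hz, coeff_mk, Gc, Hc]
  have : ((univ.filter fun p : n.Partition => partitionRank p % 5 = 3).card : ℤ) =
    ∑ j ∈ range J, (((univ.filter fun p : n.Partition => (5 * j + 3 : ℤ) ≤ partitionRank p).card : ℤ)
      - ((univ.filter fun p : n.Partition => (5 * j + 4 : ℤ) ≤ partitionRank p).card : ℤ)
      + ((univ.filter fun p : n.Partition => partitionRank p ≤ -(5 * j + 2 : ℤ)).card : ℤ)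
      - ((univ.filter fun p : n.Partition => partitionRank p ≤ -(5 * j + 3 : ℤ)).card : ℤ)) := by
    simp only [Finset.card_filter, Nat.cast_sum, ← Finset.sum_sub_distrib, ← Finset.sum_add_distrib]
    rw [Finset.sum_comm]
    refine Finset.sum_congr rfl fun p _ => ?_
    have hb := rank_bounds p
    have := ind_id (partitionRank p) J (by omega) (by omega)
    push_cast
    exact this
  have h2 := congrArg (Int.cast : ℤ → ZMod 5) this
  push_cast at h2
  exact h2

noncomputable def hh (r : ℕ) : PS := Gz (r + 2) * AP 1 1
noncomputable def hh' (r : ℕ) : PS := Hz (-(r + 2)) * AP 1 1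

theorem hh_rec (r : ℕ) : hh r = X ^ (r + 3) * (1 - hh (r + 3)) := by
  have := Gz_rec (r + 2) (by omega)
  unfold hh
  push_cast at this ⊢
  rw [this, show ((r : ℤ) + 2 + 3) = r + 3 + 2 by ring, show r + 2 + 1 = r + 3 by ring]
  linear_combination X ^ (r + 3) * Pg_mul

theorem hh'_rec (r : ℕ) : hh' r = X ^ (r + 3) * (1 - hh' (r + 3)) := by
  have := Hz_rec (r + 2) (by omega)
  unfold hh'
  push_cast at this ⊢
  rw [this, show ((r : ℤ) + 2 + 3) = r + 3 + 2 by ring, show r + 2 + 1 = r + 3 by ring]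
  linear_combination X ^ (r + 3) * Pg_mul

theorem hh_eq (r : ℕ) : hh r = hh' r :=
  eq_of_cg fun L => (rec_cg hh hh_rec r L).trans (rec_cg hh' hh'_rec r L).symm

theorem aaE_cg (J : ℕ) : Cg J (aa * AP 1 1) (∑ j ∈ range J, (hh (5 * j) - hh (5 * j + 2))) := by
  have h := (aa_cg J).mul (Cg.refl J (AP 1 1))
  refine h.trans ?_
  rw [Finset.sum_mul]
  have : ∀ j ∈ range J, (Gz (5 * j + 3) - Gz (5 * j + 4) + Hz (-(5 * j + 2)) - Hz (-(5 * j + 3)))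
      * AP 1 1 = hh (5 * j) - hh (5 * j + 2) := by
    intro j _
    have h1 := hh_eq (5 * j + 1)
    have h0 := hh_eq (5 * j)
    rw [h0]
    unfold hh hh' at *
    push_cast at h1 ⊢
    rw [show ((5 : ℤ) * j + 1 + 2) = 5 * j + 3 by ring] at h1
    rw [show ((5 : ℤ) * j + 2 + 2) = 5 * j + 4 by ring]
    linear_combination h1
  rw [Finset.sum_congr rfl this]
  exact Cg.refl _ _

noncomputable def St (k : ℕ) : PS :=
  (-1) ^ (k + 1) * X ^ (3 * tr k) * ((1 - X ^ (2 * k)) * (1 - X ^ (5 * k))⁻¹)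
noncomputable def SS : PS := psum St

theorem St_dvd (k : ℕ) : X ^ k ∣ St k := by
  refine Dvd.dvd.mul_right (Dvd.dvd.mul_left (pow_dvd_pow _ ?_) _) _
  have := le_tr k
  omega

theorem geom_cg {e : ℕ} (he : 1 ≤ e) (J : ℕ) :
    Cg J (∑ j ∈ range J, X ^ (j * e)) (1 - X ^ e)⁻¹ := by
  have h1 : (∑ j ∈ range J, (X : PS) ^ (j * e)) * (1 - X ^ e) = 1 - X ^ (J * e) := by
    have := geom_sum_mul_neg ((X : PS) ^ e) J
    rw [← pow_mul, mul_comm e J] at this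
    rw [← this]; congr 1
    exact Finset.sum_congr rfl fun j _ => by rw [← pow_mul, mul_comm]
  have h2 := mul_inv_of_cc (cc_one_sub (k := e) (by omega))
  refine ⟨- X ^ (J * e - J) * (1 - X ^ e)⁻¹, ?_⟩
  have h3 : (X : PS) ^ (J * e) = X ^ J * X ^ (J * e - J) := by
    rw [← pow_add]; congr 1
    have := Nat.le_mul_of_pos_right J (show 0 < e by omega)
    omega
  rw [h3] at h1
  linear_combination (1 - X ^ e)⁻¹ * h1 - (∑ j ∈ range J, (X : PS) ^ (j * e)) * h2

theorem aaE : aa * AP 1 1 = SS := by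
  refine eq_of_cg fun J => ?_
  refine (aaE_cg J).trans ?_
  refine Cg.trans ?_ (psum_cg St_dvd (show J ≤ J + 1 by omega)).symm
  have h1 : Cg J (∑ j ∈ range J, (hh (5 * j) - hh (5 * j + 2))) (∑ j ∈ range J,
      ((∑ k ∈ range J, (-1) ^ k * X ^ ((k + 1) * (5 * j) + 3 * tr (k + 1)))
      - (∑ k ∈ range J, (-1) ^ k * X ^ ((k + 1) * (5 * j + 2) + 3 * tr (k + 1))))) :=
    Cg.sum _ fun j _ => (rec_cg hh hh_rec _ J).sub (rec_cg hh hh_rec _ J)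
  refine h1.trans ?_
  rw [Finset.sum_range_succ']
  have z : St 0 = 0 := by simp [St]
  rw [z, add_zero]
  have h2 : ∀ j ∈ range J, ((∑ k ∈ range J, (-1) ^ k * (X : PS) ^ ((k + 1) * (5 * j) + 3 * tr (k + 1)))
      - (∑ k ∈ range J, (-1) ^ k * X ^ ((k + 1) * (5 * j + 2) + 3 * tr (k + 1)))) =
      ∑ k ∈ range J, (-1) ^ k * X ^ (3 * tr (k + 1)) * (1 - X ^ (2 * (k + 1))) *
        X ^ (j * (5 * (k + 1))) := by
    intro j _
    rw [← Finset.sum_sub_distrib]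
    refine Finset.sum_congr rfl fun k _ => ?_
    have e1 : (k + 1) * (5 * j) + 3 * tr (k + 1) = 3 * tr (k + 1) + j * (5 * (k + 1)) := by ring
    have e2 : (k + 1) * (5 * j + 2) + 3 * tr (k + 1) =
      3 * tr (k + 1) + 2 * (k + 1) + j * (5 * (k + 1)) := by ring
    rw [e1, e2]
    simp only [pow_add]
    ring
  rw [Finset.sum_congr rfl h2, Finset.sum_comm]
  refine Cg.sum _ fun k _ => ?_
  rw [← Finset.mul_sum]
  have := (geom_cg (e := 5 * (k + 1)) (by omega) J).mul_left
    ((-1) ^ k * X ^ (3 * tr (k + 1)) * (1 - X ^ (2 * (k + 1))))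
  refine this.trans ?_
  have e : St (k + 1) = (-1) ^ k * X ^ (3 * tr (k + 1)) * (1 - X ^ (2 * (k + 1))) *
      (1 - X ^ (5 * (k + 1)))⁻¹ := by
    unfold St; ring
  rw [e]
  exact Cg.refl _ _

end Eta4

namespace Eta4

theorem tr5 (i r : ℕ) : tr (5 * i + r) + 10 * i = 25 * tr i + 5 * r * i + tr r := by
  have h1 := two_tr (5 * i + r)
  have h2 := two_tr i
  have h3 := two_tr r
  nlinarith

theorem sum_range_five {M : Type*} [AddCommMonoid M] (f : ℕ → M) (N : ℕ) :
    ∑ k ∈ range (5 * N), f k = ∑ i ∈ range N,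
      (f (5 * i) + f (5 * i + 1) + f (5 * i + 2) + f (5 * i + 3) + f (5 * i + 4)) := by
  induction N with
  | zero => simp
  | succ N ih =>
    rw [Finset.sum_range_succ, ← ih, mul_add, mul_one]
    simp only [Finset.sum_range_succ, add_assoc]

/-- `1/(1-X^k)`. -/
noncomputable def iv (k : ℕ) : PS := (1 - X ^ k)⁻¹

theorem ex_iv (k : ℕ) : ex (iv k) = iv (5 * k) := by
  by_cases hk : k = 0
  · subst hk; simp [iv]
  · unfold iv
    rw [ex_inv (cc_one_sub hk), map_sub, map_one, map_pow, ex_X, ← pow_mul]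

noncomputable def s4t (i : ℕ) : PS := (-1) ^ i *
  (X ^ (15 * tr i) * iv (5 * i + 2) + X ^ (15 * tr i + 5 * i + 3) * iv (5 * i + 3))
noncomputable def s3t (i : ℕ) : PS := (-1) ^ i *
  (X ^ (15 * tr i - 3 * i) * iv (5 * i + 1) + X ^ (15 * tr i + 2 * i + 2) * iv (5 * i + 2)
   + X ^ (15 * tr i + 3 * i + 3) * iv (5 * i + 3) + X ^ (15 * tr i + 8 * i + 7) * iv (5 * i + 4))
noncomputable def s0t (i : ℕ) : PS := (-1) ^ (i + 1) *
  (X ^ (15 * tr i - 6 * i) * iv (5 * i) - X ^ (15 * tr i - 4 * i) * iv (5 * i)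
   + X ^ (15 * tr i - i + 1) * iv (5 * i + 1) + X ^ (15 * tr i + 6 * i + 6) * iv (5 * i + 4))

theorem xdvd {i e : ℕ} (h : i ≤ e) (f : PS) : X ^ i ∣ X ^ e * f :=
  Dvd.dvd.mul_right (pow_dvd_pow _ h) _

theorem s4t_dvd (i : ℕ) : X ^ i ∣ s4t i := by
  have := le_tr i
  exact Dvd.dvd.mul_left (dvd_add (xdvd (by omega) _) (xdvd (by omega) _)) _
theorem s3t_dvd (i : ℕ) : X ^ i ∣ s3t i := by
  have := le_tr i
  exact Dvd.dvd.mul_left (dvd_add (dvd_add (dvd_add (xdvd (by omega) _) (xdvd (by omega) _))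
    (xdvd (by omega) _)) (xdvd (by omega) _)) _
theorem s0t_dvd (i : ℕ) : X ^ i ∣ s0t i := by
  have := le_tr i
  exact Dvd.dvd.mul_left (dvd_add (dvd_add (dvd_sub (xdvd (by omega) _) (xdvd (by omega) _))
    (xdvd (by omega) _)) (xdvd (by omega) _)) _

theorem St_group (i : ℕ) : St (5 * i) + St (5 * i + 1) + St (5 * i + 2) + St (5 * i + 3)
    + St (5 * i + 4) = ex (s0t i) + X ^ 3 * ex (s3t i) - X ^ 9 * ex (s4t i) := by
  have hl := le_tr i
  have h0 := tr5 i 0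
  have h1 := tr5 i 1
  have h2 := tr5 i 2
  have h3 := tr5 i 3
  have h4 := tr5 i 4
  rw [show tr 0 = 0 from rfl] at h0
  rw [show tr 1 = 1 from rfl] at h1
  rw [show tr 2 = 3 from rfl] at h2
  rw [show tr 3 = 6 from rfl] at h3
  rw [show tr 4 = 10 from rfl] at h4
  have hs : ((-1 : PS)) ^ (5 * i) = (-1) ^ i := by rw [pow_mul]; norm_num
  have key : ∀ k, St k = (-1) ^ (k + 1) * (X ^ (3 * tr k) * iv (5 * k)
      - X ^ (3 * tr k + 2 * k) * iv (5 * k)) := by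
    intro k; unfold St iv; rw [pow_add X]; ring
  simp only [key, s0t, s3t, s4t, map_mul, map_sub, map_add, map_pow, map_neg, map_one, ex_X, ex_iv,
    ← pow_mul]
  have e0 : 3 * tr (5 * i) = 5 * (15 * tr i - 6 * i) := by simp at h0; omega
  have e0' : 3 * tr (5 * i) + 2 * (5 * i) = 5 * (15 * tr i - 4 * i) := by simp at h0; omega
  have e1 : 3 * tr (5 * i + 1) = 3 + 5 * (15 * tr i - 3 * i) := by omega
  have e1' : 3 * tr (5 * i + 1) + 2 * (5 * i + 1) = 5 * (15 * tr i - i + 1) := by omega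
  have e2 : 3 * tr (5 * i + 2) = 9 + 5 * (15 * tr i) := by omega
  have e2' : 3 * tr (5 * i + 2) + 2 * (5 * i + 2) = 3 + 5 * (15 * tr i + 2 * i + 2) := by omega
  have e3 : 3 * tr (5 * i + 3) = 3 + 5 * (15 * tr i + 3 * i + 3) := by omega
  have e3' : 3 * tr (5 * i + 3) + 2 * (5 * i + 3) = 9 + 5 * (15 * tr i + 5 * i + 3) := by omega
  have e4 : 3 * tr (5 * i + 4) = 5 * (15 * tr i + 6 * i + 6) := by omega
  have e4' : 3 * tr (5 * i + 4) + 2 * (5 * i + 4) = 3 + 5 * (15 * tr i + 8 * i + 7) := by omega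
  rw [e0', e1', e2', e3', e4', e0, e1, e2, e3, e4]
  simp only [pow_add (-1 : PS), hs, pow_add X 3, pow_add X 9]
  ring

theorem SS_diss : SS = ex (psum s0t) + X ^ 3 * ex (psum s3t) - X ^ 9 * ex (psum s4t) := by
  refine eq_of_cg fun L => ?_
  have h := psum_cg St_dvd (show L ≤ 5 * L by omega)
  refine h.trans ?_
  rw [sum_range_five]
  have : ∑ i ∈ range L, (St (5 * i) + St (5 * i + 1) + St (5 * i + 2) + St (5 * i + 3)
    + St (5 * i + 4)) = ex (∑ i ∈ range L, s0t i) + X ^ 3 * ex (∑ i ∈ range L, s3t i)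
      - X ^ 9 * ex (∑ i ∈ range L, s4t i) := by
    simp only [map_sum, Finset.mul_sum, ← Finset.sum_add_distrib, ← Finset.sum_sub_distrib]
    exact Finset.sum_congr rfl fun i _ => St_group i
  rw [this]
  have m : L ≤ 5 * L := by omega
  have q0 := (psum_cg s0t_dvd (le_refl L)).expand.mono m
  have q3 := (psum_cg s3t_dvd (le_refl L)).expand.mono m
  have q4 := (psum_cg s4t_dvd (le_refl L)).expand.mono m
  exact ((q0.add (q3.mul_left _)).sub (q4.mul_left _)).symm

end Eta4

namespace Eta4

section gen
variable {F : Type*} [Field F] (q : F)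

theorem pf (hq : q ≠ 0) (hq1 : ∀ k : ℤ, k ≠ 0 → q ^ k ≠ 1) {ι : Type*} [DecidableEq ι]
    (s : Finset ι) (k : ι → ℤ) (hk : Set.InjOn k s) (h0 : ∀ j ∈ s, k j ≠ 0) (M : ℕ)
    (hM : M < s.card) :
    1 = (∏ j ∈ s, (1 - q ^ (k j))) * ∑ i ∈ s, q ^ (-(k i * M)) * (1 - q ^ (k i))⁻¹ *
      (∏ j ∈ s.erase i, (1 - q ^ (k j - k i)))⁻¹ := by
  have hsub : ∀ a b : ℤ, q ^ a = q ^ b → a = b := by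
    intro a b hab
    by_contra hne
    apply hq1 (a - b) (sub_ne_zero.2 hne)
    rw [zpow_sub₀ hq, hab, div_self (zpow_ne_zero _ hq)]
  set v : ι → F := fun j => q ^ (-(k j)) with hv
  have hvi : Set.InjOn v s := by
    intro a ha b hb hab
    exact hk ha hb (neg_injective (hsub _ _ hab))
  have hx : ∀ i ∈ s, (1 : F) ≠ v i := by
    intro i hi h
    exact hq1 (-(k i)) (neg_ne_zero.2 (h0 i hi)) h.symm
  have h1 := Lagrange.eq_interpolate (f := (Polynomial.X : Polynomial F) ^ M) hvi
    (by rw [Polynomial.degree_X_pow]; exact_mod_cast hM)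
  have h2 := congrArg (Polynomial.eval 1) h1
  rw [Lagrange.eval_interpolate_not_at_node _ hx, Lagrange.eval_nodal] at h2
  simp only [Polynomial.eval_pow, Polynomial.eval_X, one_pow, Lagrange.nodalWeight] at h2
  refine h2.trans ?_
  rw [Finset.mul_sum, Finset.mul_sum]
  refine Finset.sum_congr rfl fun i hi => ?_
  have e1 : ∀ j, 1 - v j = (-v j) * (1 - q ^ (k j)) := by
    intro j
    simp only [hv, zpow_neg]
    have := zpow_ne_zero (k j) hq
    field_simp
    ring
  have e2 : ∀ j, v i - v j = (-v j) * (1 - q ^ (k j - k i)) := by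
    intro j
    simp only [hv, zpow_neg, zpow_sub₀ hq]
    have := zpow_ne_zero (k j) hq
    have := zpow_ne_zero (k i) hq
    field_simp
    ring
  have e3 : v i ^ M = q ^ (-(k i * M)) := by
    simp only [hv]
    rw [← zpow_natCast, ← zpow_mul, neg_mul]
  have hvn : ∀ j, -v j ≠ 0 := fun j => neg_ne_zero.2 (zpow_ne_zero _ hq)
  have hpn : ∏ j ∈ s.erase i, (-v j) ≠ 0 := Finset.prod_ne_zero_iff.2 fun j _ => hvn j
  rw [e3, Finset.prod_inv_distrib, Finset.prod_congr rfl (fun j _ => e1 j),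
    Finset.prod_congr rfl (fun j _ => e2 j), Finset.prod_mul_distrib, Finset.prod_mul_distrib,
    ← Finset.mul_prod_erase s (fun j => -v j) hi, e1 i]
  rw [mul_inv, mul_inv]
  have := hvn i
  generalize (∏ x ∈ s.erase i, -v x) = p at *
  generalize (-v i) = w at *
  field_simp

/-- `∏ (1 - q^(5t+c))`. -/
def pz (c : ℤ) (m : ℕ) : F := ∏ t ∈ range m, (1 - q ^ (5 * (t : ℤ) + c))

theorem pz_succ' (c : ℤ) (m : ℕ) : pz q c (m + 1) = (1 - q ^ c) * pz q (c + 5) m := by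
  unfold pz
  rw [Finset.prod_range_succ', mul_comm]
  congr 1
  · simp
  · refine Finset.prod_congr rfl fun t _ => ?_
    congr 2; push_cast; ring

theorem flip1 (hq : q ≠ 0) (e f : ℤ) (h : e + f = 0) : 1 - q ^ e = (-1) * q ^ e * (1 - q ^ f) := by
  have : q ^ e * q ^ f = 1 := by rw [← zpow_add₀ hq, h, zpow_zero]
  linear_combination (-1 : F) * this

theorem pz_neg (hq : q ≠ 0) (d : ℤ) (m : ℕ) : ∏ i ∈ range m, (1 - q ^ (5 * ((i : ℤ) - m) + d)) =
    (-1) ^ m * q ^ (d * m - 5 * tr m) * pz q (5 - d) m := by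
  rw [← Finset.prod_range_reflect]
  induction m with
  | zero => simp [tr, pz]
  | succ m ih =>
    have h1 : ∏ j ∈ range m, (1 - q ^ (5 * (((m + 1 - 1 - j : ℕ) : ℤ) - (m + 1 : ℕ)) + d)) =
        ∏ j ∈ range m, (1 - q ^ (5 * (((m - 1 - j : ℕ) : ℤ) - m) + d)) := by
      refine Finset.prod_congr rfl fun t ht => ?_
      rw [Finset.mem_range] at ht
      congr 3; omega
    rw [Finset.prod_range_succ, h1, ih, pz, pz, Finset.prod_range_succ]
    have h2 : (1 - q ^ (5 * (((m + 1 - 1 - m : ℕ) : ℤ) - (m + 1 : ℕ)) + d)) =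
      (-1) * q ^ (d - 5 * (m + 1)) * (1 - q ^ (5 * (m : ℤ) + (5 - d))) := by
      rw [← flip1 q hq (d - 5 * (m + 1)) (5 * (m : ℤ) + (5 - d)) (by ring)]
      congr 2; push_cast; simp; ring
    rw [h2, tr, show d * ((m + 1 : ℕ) : ℤ) - 5 * ((tr m + (m + 1) : ℕ) : ℤ) =
      (d * m - 5 * tr m) + (d - 5 * (m + 1)) by push_cast; ring, zpow_add₀ hq (d * m - 5 * tr m)]
    ring

theorem pd (hq : q ≠ 0) (d : ℤ) (m u : ℕ) :
    ∏ i ∈ range (m + u), (1 - q ^ (5 * ((i : ℤ) - m) + d)) =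
    (-1) ^ m * q ^ (d * m - 5 * tr m) * pz q (5 - d) m * pz q d u := by
  rw [Finset.prod_range_add, pz_neg q hq]
  congr 1
  refine Finset.prod_congr rfl fun t _ => ?_
  congr 2; push_cast; ring

theorem pd0 (hq : q ≠ 0) (m u : ℕ) :
    ∏ i ∈ range (m + (u + 1)), (if i = m then 1 else (1 - q ^ (5 * ((i : ℤ) - m) + 0))) =
    (-1) ^ m * q ^ (- 5 * (tr m : ℤ)) * pz q 5 m * pz q 5 u := by
  rw [Finset.prod_range_add]
  have h1 := pz_neg q hq 0 m
  rw [show (0 : ℤ) * m - 5 * tr m = - 5 * (tr m : ℤ) by ring, sub_zero] at h1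
  rw [← h1]
  congr 1
  · refine Finset.prod_congr rfl fun t ht => ?_
    rw [Finset.mem_range] at ht
    rw [if_neg (by omega)]
  · rw [Finset.prod_range_succ', if_pos (by simp), mul_one]
    refine Finset.prod_congr rfl fun t _ => ?_
    rw [if_neg (by omega)]
    congr 2; push_cast; ring

theorem pdn (hq : q ≠ 0) (c : ℤ) (m u : ℕ) :
    ∏ i ∈ range (m + (u + 1)), (1 - q ^ (5 * ((i : ℤ) - m) + -c)) =
    (-1) ^ (m + 1) * q ^ (- c * (m + 1) - 5 * tr m) * pz q c (m + 1) * pz q (5 - c) u := by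
  rw [pd q hq, pz_succ', pz_succ', show -c * ((m : ℤ) + 1) - 5 * tr m = (-c * m - 5 * tr m) + (-c) by ring,
    zpow_add₀ hq, show 5 - -c = c + 5 by ring, show -c + 5 = 5 - c by ring]
  have : 1 - q ^ (-c) = (-1) * q ^ (-c) * (1 - q ^ c) := by
    exact flip1 q hq _ _ (by ring)
  rw [this]
  ring

end gen

end Eta4

namespace Eta4

section gen
variable {F : Type*} [Field F] (q : F)

theorem sum123 {M : Type*} [AddCommMonoid M] (f : ℕ → M) :
    ∑ s ∈ ({1, 2, 3} : Finset ℕ), f s = f 1 + f 2 + f 3 := by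
  simp [Finset.sum_insert, add_assoc]
theorem prod123 {M : Type*} [CommMonoid M] (f : ℕ → M) :
    ∏ s ∈ ({1, 2, 3} : Finset ℕ), f s = f 1 * f 2 * f 3 := by
  simp [Finset.prod_insert, mul_assoc]

theorem Derase (n m r : ℕ) : ∏ j ∈ (range (2 * n) ×ˢ ({1, 2, 3} : Finset ℕ)).erase (m, r),
      (1 - q ^ ((5 * ((j.1 : ℤ) - n) + j.2) - (5 * ((m : ℤ) - n) + r))) =
    ∏ s ∈ ({1, 2, 3} : Finset ℕ), ∏ i ∈ range (2 * n), (if i = m ∧ s = r then 1 else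
      (1 - q ^ (5 * ((i : ℤ) - m) + ((s : ℤ) - r)))) := by
  rw [← Finset.prod_product_right (range (2 * n)) ({1, 2, 3} : Finset ℕ)
    (fun j => if j.1 = m ∧ j.2 = r then 1 else
      (1 - q ^ (5 * ((j.1 : ℤ) - m) + ((j.2 : ℤ) - r))))]
  refine Eq.trans ?_ (Finset.prod_erase (a := (m, r)) _ (by simp))
  refine Finset.prod_congr rfl fun j hj => ?_
  rw [Finset.mem_erase] at hj
  rw [if_neg (by intro h; exact hj.1 (Prod.ext h.1 h.2))]
  congr 2; ring

theorem D1 (hq : q ≠ 0) (n m u : ℕ) (h : 2 * n = m + (u + 1)) :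
    ∏ j ∈ (range (2 * n) ×ˢ ({1, 2, 3} : Finset ℕ)).erase (m, 1),
      (1 - q ^ ((5 * ((j.1 : ℤ) - n) + j.2) - (5 * ((m : ℤ) - n) + (1 : ℕ)))) =
    (-1) ^ m * q ^ (3 * (m : ℤ) - 15 * tr m) * (pz q 5 m * pz q 5 u * (pz q 4 m * pz q 1 (u + 1)) *
      (pz q 3 m * pz q 2 (u + 1))) := by
  rw [Derase, prod123, h]
  have a0 := pd0 q hq m u
  have a1 := pd q hq 1 m (u + 1)
  have a2 := pd q hq 2 m (u + 1)
  norm_num [-zpow_neg] at a0 a1 a2 ⊢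
  rw [a0, a1, a2, show 3 * (m : ℤ) - 15 * tr m = (- (5 * (tr m : ℤ))) + (m - 5 * tr m) + (2 * m - 5 * tr m) by ring,
    zpow_add₀ hq, zpow_add₀ hq]
  have : ((-1 : F) ^ m) * (-1) ^ m = 1 := by rw [← mul_pow]; simp
  linear_combination (-1) ^ m * pz q 5 m * pz q 5 u * (pz q 4 m * pz q 1 (u + 1)) *
      (pz q 3 m * pz q 2 (u + 1)) * q ^ (- (5 * (tr m : ℤ))) * q ^ ((m : ℤ) - 5 * tr m) * q ^ (2 * (m : ℤ) - 5 * tr m) * this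

theorem D2 (hq : q ≠ 0) (n m u : ℕ) (h : 2 * n = m + (u + 1)) :
    ∏ j ∈ (range (2 * n) ×ˢ ({1, 2, 3} : Finset ℕ)).erase (m, 2),
      (1 - q ^ ((5 * ((j.1 : ℤ) - n) + j.2) - (5 * ((m : ℤ) - n) + (2 : ℕ)))) =
    (-1) ^ (m + 1) * q ^ (- 15 * (tr m : ℤ) - 1) * (pz q 5 m * pz q 5 u * (pz q 4 m * pz q 1 (u + 1)) *
      (pz q 1 (m + 1) * pz q 4 u)) := by
  rw [Derase, prod123, h]
  have a0 := pd0 q hq m u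
  have a1 := pd q hq 1 m (u + 1)
  have a2 := pdn q hq 1 m u
  norm_num [-zpow_neg] at a0 a1 a2 ⊢
  rw [a0, a1, a2, show - (15 * (tr m : ℤ)) - 1 = (- (5 * (tr m : ℤ))) + (m - 5 * tr m) + (-1 + -(m:ℤ) - 5 * tr m) by ring,
    zpow_add₀ hq, zpow_add₀ hq]
  have : ((-1 : F) ^ m) * (-1) ^ m = 1 := by rw [← mul_pow]; simp
  linear_combination (-1) ^ (m + 1) * pz q 5 m * pz q 5 u * (pz q 4 m * pz q 1 (u + 1)) *
      (pz q 1 (m + 1) * pz q 4 u) * q ^ (- (5 * (tr m : ℤ))) * q ^ ((m : ℤ) - 5 * tr m) * q ^ (-1 + -(m:ℤ) - 5 * tr m) * this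

theorem D3 (hq : q ≠ 0) (n m u : ℕ) (h : 2 * n = m + (u + 1)) :
    ∏ j ∈ (range (2 * n) ×ˢ ({1, 2, 3} : Finset ℕ)).erase (m, 3),
      (1 - q ^ ((5 * ((j.1 : ℤ) - n) + j.2) - (5 * ((m : ℤ) - n) + (3 : ℕ)))) =
    (-1) ^ m * q ^ (- 3 * (m : ℤ) - 3 - 15 * (tr m : ℤ)) * (pz q 5 m * pz q 5 u * (pz q 2 (m + 1) * pz q 3 u) *
      (pz q 1 (m + 1) * pz q 4 u)) := by
  rw [Derase, prod123, h]
  have a0 := pd0 q hq m u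
  have a1 := pdn q hq 2 m u
  have a2 := pdn q hq 1 m u
  norm_num [-zpow_neg] at a0 a1 a2 ⊢
  rw [a0, a1, a2, show - (3 * (m : ℤ)) - 3 - 15 * (tr m : ℤ) = (- (5 * (tr m : ℤ))) + (-(2 * ((m : ℤ) + 1)) - 5 * tr m) + (-1 + -(m:ℤ) - 5 * tr m) by ring,
    zpow_add₀ hq, zpow_add₀ hq]
  have : ((-1 : F) ^ (m + 1)) * (-1) ^ (m + 1) = 1 := by rw [← mul_pow]; simp
  linear_combination (-1) ^ m * pz q 5 m * pz q 5 u * (pz q 2 (m + 1) * pz q 3 u) *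
      (pz q 1 (m + 1) * pz q 4 u) * q ^ (- (5 * (tr m : ℤ))) * q ^ (-(2 * ((m : ℤ) + 1)) - 5 * tr m) * q ^ (-1 + -(m:ℤ) - 5 * tr m) * this

theorem W0 (hq : q ≠ 0) (n : ℕ) : ∏ j ∈ (range (2 * n) ×ˢ ({1, 2, 3} : Finset ℕ)),
      (1 - q ^ (5 * ((j.1 : ℤ) - n) + j.2)) =
    (-1) ^ n * q ^ (6 * (n : ℤ) - 15 * tr n) * (pz q 4 n * pz q 1 n * (pz q 3 n * pz q 2 n) ^ 2) := by
  rw [Finset.prod_product_right, prod123, two_mul]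
  have a1 := pd q hq 1 n n
  have a2 := pd q hq 2 n n
  have a3 := pd q hq 3 n n
  norm_num [-zpow_neg] at a1 a2 a3 ⊢
  rw [a1, a2, a3, show 6 * (n : ℤ) - 15 * tr n = (n - 5 * tr n) + (2 * n - 5 * tr n) + (3 * n - 5 * tr n) by ring,
    zpow_add₀ hq, zpow_add₀ hq]
  have : ((-1 : F) ^ n) * (-1) ^ n = 1 := by rw [← mul_pow]; simp
  linear_combination (-1) ^ n * (pz q 4 n * pz q 1 n * (pz q 3 n * pz q 2 n) ^ 2) * q ^ ((n : ℤ) - 5 * tr n) * q ^ (2 * (n : ℤ) - 5 * tr n) * q ^ (3 * (n : ℤ) - 5 * tr n) * this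

/-- general term. -/
def tm (i t : ℤ) (m u : ℕ) : F :=
    q ^ (15 * t - 3 * i) * (1 - q ^ (5 * i + 1))⁻¹ * (pz q 5 m * pz q 5 u * (pz q 4 m * pz q 1 (u + 1)) *
      (pz q 3 m * pz q 2 (u + 1)))⁻¹
    + q ^ (15 * t + 3 * i + 3) * (1 - q ^ (5 * i + 3))⁻¹ * (pz q 5 m * pz q 5 u * (pz q 2 (m + 1) * pz q 3 u) *
      (pz q 1 (m + 1) * pz q 4 u))⁻¹
    - q ^ (15 * t + 1) * (1 - q ^ (5 * i + 2))⁻¹ * (pz q 5 m * pz q 5 u * (pz q 4 m * pz q 1 (u + 1)) *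
      (pz q 1 (m + 1) * pz q 4 u))⁻¹

theorem tm_eq (hq : q ≠ 0) (n m u : ℕ) (h : 2 * n = m + (u + 1)) (i t : ℤ) (hi : (m : ℤ) = n + i)
    (ht : (tr m : ℤ) = tr n + t + n * i) :
    ((-1) ^ n * q ^ (6 * (n : ℤ) - 15 * tr n)) * ∑ r ∈ ({1, 2, 3} : Finset ℕ),
      q ^ (-((5 * ((m : ℤ) - n) + r) * (3 * n : ℕ))) * (1 - q ^ (5 * ((m : ℤ) - n) + r))⁻¹ *
      (∏ j ∈ (range (2 * n) ×ˢ ({1, 2, 3} : Finset ℕ)).erase (m, r),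
      (1 - q ^ ((5 * ((j.1 : ℤ) - n) + j.2) - (5 * ((m : ℤ) - n) + r))))⁻¹ =
    (-1) ^ (n + m) * tm q i t m u := by
  rw [sum123, D1 q hq n m u h, D2 q hq n m u h, D3 q hq n m u h]
  have hs : ((-1 : F) ^ m)⁻¹ = (-1) ^ m := by rw [← inv_pow]; norm_num
  simp only [mul_inv, pow_succ, hs, ← zpow_neg]
  unfold tm
  rw [show (m : ℤ) - n = i by omega]
  simp only [mul_inv]
  have z1 : q ^ (6 * (n : ℤ) - 15 * tr n) * q ^ (-((5 * i + (1 : ℕ)) * (3 * n : ℕ))) *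
    q ^ (-(3 * (m : ℤ) - 15 * tr m)) = q ^ (15 * t - 3 * i) := by
    rw [← zpow_add₀ hq, ← zpow_add₀ hq, ht, hi]; congr 1; push_cast; ring
  have z2 : q ^ (6 * (n : ℤ) - 15 * tr n) * q ^ (-((5 * i + (2 : ℕ)) * (3 * n : ℕ))) *
    q ^ (-(-15 * (tr m : ℤ) - 1)) = q ^ (15 * t + 1) := by
    rw [← zpow_add₀ hq, ← zpow_add₀ hq, ht]; congr 1; push_cast; ring
  have z3 : q ^ (6 * (n : ℤ) - 15 * tr n) * q ^ (-((5 * i + (3 : ℕ)) * (3 * n : ℕ))) *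
    q ^ (-(-3 * (m : ℤ) - 3 - 15 * tr m)) = q ^ (15 * t + 3 * i + 3) := by
    rw [← zpow_add₀ hq, ← zpow_add₀ hq, ht, hi]; congr 1; push_cast; ring
  rw [← z1, ← z2, ← z3, show (-1 : F)⁻¹ = -1 by norm_num, pow_add]
  simp only [Nat.cast_one, Nat.cast_ofNat]
  generalize (1 - q ^ (5 * i + 1))⁻¹ = g1
  generalize (1 - q ^ (5 * i + 2))⁻¹ = g2
  generalize (1 - q ^ (5 * i + 3))⁻¹ = g3
  generalize q ^ (6 * (n : ℤ) - 15 * tr n) = x0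
  generalize q ^ (-((5 * i + 1) * ((3 * n : ℕ) : ℤ))) = y1
  generalize q ^ (-((5 * i + 2) * ((3 * n : ℕ) : ℤ))) = y2
  generalize q ^ (-((5 * i + 3) * ((3 * n : ℕ) : ℤ))) = y3
  generalize q ^ (-(3 * (m : ℤ) - 15 * tr m)) = w1
  generalize q ^ (-(-15 * (tr m : ℤ) - 1)) = w2
  generalize q ^ (-(-3 * (m : ℤ) - 3 - 15 * tr m)) = w3
  ring

theorem Kfin (hq : q ≠ 0) (hq1 : ∀ k : ℤ, k ≠ 0 → q ^ k ≠ 1) (n : ℕ) (hn : 1 ≤ n) :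
    1 = (pz q 4 n * pz q 1 n * (pz q 3 n * pz q 2 n) ^ 2) * ∑ i ∈ range n,
      (-1) ^ i * (tm q i (tr i) (n + i) (n - 1 - i) - tm q (-(i : ℤ) - 1) (tr i) (n - 1 - i) (n + i)) := by
  have h := pf q hq hq1 (range (2 * n) ×ˢ ({1, 2, 3} : Finset ℕ))
    (fun j => 5 * ((j.1 : ℤ) - n) + j.2) (by
      rintro ⟨a, b⟩ h1 ⟨c, d⟩ h2 h3
      simp at h1 h2 h3
      ext <;> simp <;> omega) (by
      rintro ⟨a, b⟩ h1
      simp at h1 ⊢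
      omega) (3 * n) (by rw [Finset.card_product]; simp; omega)
  rw [W0 q hq, Finset.sum_product, mul_comm ((-1) ^ n * q ^ (6 * (n : ℤ) - 15 * tr n)), mul_assoc] at h
  refine h.trans ?_
  congr 1
  rw [Finset.mul_sum, two_mul, Finset.sum_range_add, ← Finset.sum_range_reflect, ← Finset.sum_add_distrib, ← two_mul]
  refine Finset.sum_congr rfl fun i hi => ?_
  rw [Finset.mem_range] at hi
  have t1 := two_tr n
  have t2 := two_tr i
  have t3 := two_tr (n + i)
  have hm : ((n - 1 - i : ℕ) : ℤ) = n - 1 - i := by omega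
  have t4 := two_tr (n - 1 - i)
  zify at t1 t2 t3 t4
  rw [hm] at t4
  have r1 := tm_eq q hq n (n + i) (n - 1 - i) (by omega) i (tr i) (by push_cast; ring)
    (by linarith)
  have r2 := tm_eq q hq n (n - 1 - i) (n + i) (by omega) (-(i : ℤ) - 1) (tr i) (by rw [hm]; ring)
    (by linarith)
  dsimp only
  rw [r1, r2]
  have s1 : (-1 : F) ^ (n + (n + i)) = (-1) ^ i := by
    rw [← add_assoc, pow_add, ← two_mul, pow_mul]; simp
  have s2 : (-1 : F) ^ (n + (n - 1 - i)) = - (-1) ^ i := by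
    have : (-1 : F) ^ (n + (n - 1 - i)) * (-1) ^ (i + 1) = 1 := by
      rw [← pow_add, show n + (n - 1 - i) + (i + 1) = 2 * n by omega, pow_mul]; simp
    have h2 : (-1 : F) ^ i * (-1) ^ i = 1 := by rw [← mul_pow]; simp
    rw [pow_succ] at this
    linear_combination -(-1) ^ (n + (n - 1 - i)) * h2 - (-1) ^ i * this
  rw [s1, s2]
  ring

end gen

end Eta4

namespace Eta4

noncomputable def C1 (m u : ℕ) : PS := fp 5 5 m * fp 5 5 u * (fp 5 4 m * fp 5 1 (u + 1)) *
  (fp 5 3 m * fp 5 2 (u + 1))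
noncomputable def C2 (m u : ℕ) : PS := fp 5 5 m * fp 5 5 u * (fp 5 2 (m + 1) * fp 5 3 u) *
  (fp 5 1 (m + 1) * fp 5 4 u)
noncomputable def C3 (m u : ℕ) : PS := fp 5 5 m * fp 5 5 u * (fp 5 4 m * fp 5 1 (u + 1)) *
  (fp 5 1 (m + 1) * fp 5 4 u)

theorem cc_C1 (m u : ℕ) : constantCoeff (C1 m u) = 1 := by simp [C1, cc_fp]
theorem cc_C2 (m u : ℕ) : constantCoeff (C2 m u) = 1 := by simp [C2, cc_fp]
theorem cc_C3 (m u : ℕ) : constantCoeff (C3 m u) = 1 := by simp [C3, cc_fp]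

noncomputable def ph : PS →+* FractionRing PS := algebraMap PS (FractionRing PS)
theorem ph_inj : Function.Injective ph := IsFractionRing.injective PS (FractionRing PS)
noncomputable def qq : FractionRing PS := ph X

theorem qq0 : qq ≠ 0 := by
  intro h
  have : ph X = ph 0 := by rw [map_zero]; exact h
  exact X_ne_zero (ph_inj this)
theorem qq1 (k : ℤ) (hk : k ≠ 0) : qq ^ k ≠ 1 := by
  have key : ∀ n : ℕ, n ≠ 0 → qq ^ n ≠ 1 := by
    intro n hn h
    have : ph (X ^ n) = ph 1 := by rw [map_pow, map_one]; exact h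
    have h2 := congrArg constantCoeff (ph_inj this)
    simp [hn] at h2
  rcases k with n | n
  · have := key n (by rintro rfl; simp at hk)
    simpa using this
  · have := key (n + 1) (by omega)
    rw [zpow_negSucc]
    intro h
    exact this (inv_eq_one.1 h)

theorem ph_inv {f : PS} (h : constantCoeff f = 1) : ph f⁻¹ = (ph f)⁻¹ := by
  apply eq_inv_of_mul_eq_one_left
  rw [← map_mul, inv_mul_of_cc h, map_one]

theorem ph_fp (c m : ℕ) : ph (fp 5 c m) = pz qq c m := by
  simp only [fp, pz, map_prod, map_sub, map_one, map_pow]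
  refine Finset.prod_congr rfl fun t _ => ?_
  congr 1

theorem ph_iv {k : ℕ} (hk : k ≠ 0) : ph (iv k) = (1 - qq ^ (k : ℤ))⁻¹ := by
  rw [iv, ph_inv (cc_one_sub hk), map_sub, map_one, map_pow, zpow_natCast]; rfl

theorem ph_C1 (m u : ℕ) : ph (C1 m u)⁻¹ = (pz qq 5 m * pz qq 5 u * (pz qq 4 m * pz qq 1 (u + 1)) *
      (pz qq 3 m * pz qq 2 (u + 1)))⁻¹ := by
  rw [ph_inv (cc_C1 m u)]; simp only [C1, map_mul, ph_fp]; norm_num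
theorem ph_C2 (m u : ℕ) : ph (C2 m u)⁻¹ = (pz qq 5 m * pz qq 5 u * (pz qq 2 (m + 1) * pz qq 3 u) *
      (pz qq 1 (m + 1) * pz qq 4 u))⁻¹ := by
  rw [ph_inv (cc_C2 m u)]; simp only [C2, map_mul, ph_fp]; norm_num
theorem ph_C3 (m u : ℕ) : ph (C3 m u)⁻¹ = (pz qq 5 m * pz qq 5 u * (pz qq 4 m * pz qq 1 (u + 1)) *
      (pz qq 1 (m + 1) * pz qq 4 u))⁻¹ := by
  rw [ph_inv (cc_C3 m u)]; simp only [C3, map_mul, ph_fp]; norm_num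

theorem ph_term {e k : ℕ} {a p : ℤ} (hk : k ≠ 0) (ha : (e : ℤ) = a) (hp : (k : ℤ) = p) :
    ph (X ^ e * iv k) = qq ^ a * (1 - qq ^ p)⁻¹ := by
  rw [map_mul, ph_iv hk, map_pow, ← ha, ← hp, zpow_natCast]; rfl

theorem ph_term_neg {e k : ℕ} {a p : ℤ} (hk : k ≠ 0) (ha : (e : ℤ) = a - p) (hp : (k : ℤ) = -p) :
    ph (X ^ e * iv k) = - (qq ^ a * (1 - qq ^ p)⁻¹) := by
  rw [ph_term hk rfl rfl, ha, hp]
  have h1 := flip1 qq qq0 p (-p) (by ring)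
  have h2 : 1 - qq ^ (-p) ≠ 0 := sub_ne_zero.2 (qq1 _ (by omega)).symm
  rw [h1, mul_inv, mul_inv, zpow_sub₀ qq0]
  norm_num
  field_simp

noncomputable def tp (i m u : ℕ) : PS := X ^ (15 * tr i - 3 * i) * iv (5 * i + 1) * (C1 m u)⁻¹
  + X ^ (15 * tr i + 3 * i + 3) * iv (5 * i + 3) * (C2 m u)⁻¹
  - X * (X ^ (15 * tr i) * iv (5 * i + 2)) * (C3 m u)⁻¹
noncomputable def tn (i m u : ℕ) : PS := X ^ (15 * tr i + 8 * i + 7) * iv (5 * i + 4) * (C1 m u)⁻¹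
  + X ^ (15 * tr i + 2 * i + 2) * iv (5 * i + 2) * (C2 m u)⁻¹
  - X * (X ^ (15 * tr i + 5 * i + 3) * iv (5 * i + 3)) * (C3 m u)⁻¹

theorem ph_tp (i m u : ℕ) : ph (tp i m u) = tm qq i (tr i) m u := by
  have hl := le_tr i
  rw [tp, tm, ← mul_assoc X, ← pow_succ']
  rw [map_sub, map_add, map_mul _ _ (C1 m u)⁻¹, map_mul _ _ (C2 m u)⁻¹, map_mul _ _ (C3 m u)⁻¹]
  rw [ph_C1, ph_C2, ph_C3,
    ph_term (a := 15 * (tr i : ℤ) - 3 * i) (p := 5 * i + 1) (by omega) (by omega) (by omega),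
    ph_term (a := 15 * (tr i : ℤ) + 3 * i + 3) (p := 5 * i + 3) (by omega) (by omega) (by omega),
    ph_term (a := 15 * (tr i : ℤ) + 1) (p := 5 * i + 2) (by omega) (by omega) (by omega)]

theorem ph_tn (i m u : ℕ) : ph (tn i m u) = - tm qq (-(i : ℤ) - 1) (tr i) m u := by
  have hl := le_tr i
  rw [tn, tm, ← mul_assoc X, ← pow_succ']
  rw [map_sub, map_add, map_mul _ _ (C1 m u)⁻¹, map_mul _ _ (C2 m u)⁻¹, map_mul _ _ (C3 m u)⁻¹]
  rw [ph_C1, ph_C2, ph_C3,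
    ph_term_neg (a := 15 * (tr i : ℤ) - 3 * (-(i : ℤ) - 1)) (p := 5 * (-(i : ℤ) - 1) + 1) (by omega) (by omega) (by omega),
    ph_term_neg (a := 15 * (tr i : ℤ) + 3 * (-(i : ℤ) - 1) + 3) (p := 5 * (-(i : ℤ) - 1) + 3) (by omega) (by omega) (by omega),
    ph_term_neg (a := 15 * (tr i : ℤ) + 1) (p := 5 * (-(i : ℤ) - 1) + 2) (by omega) (by omega) (by omega)]
  ring

theorem Kps (n : ℕ) (hn : 1 ≤ n) : 1 = (fp 5 4 n * fp 5 1 n * (fp 5 3 n * fp 5 2 n) ^ 2) *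
    ∑ i ∈ range n, (-1) ^ i * (tp i (n + i) (n - 1 - i) + tn i (n - 1 - i) (n + i)) := by
  apply ph_inj
  have := Kfin qq qq0 qq1 n hn
  simp only [map_mul, map_one, map_sum, map_pow, map_add, map_neg, ph_tp, ph_tn, ph_fp]
  simpa only [Nat.cast_one, Nat.cast_ofNat, sub_eq_add_neg] using this

noncomputable def K1 : PS := AP 5 5 * AP 5 5 * (AP 5 4 * AP 5 1) * (AP 5 3 * AP 5 2)
noncomputable def K3 : PS := AP 5 5 * AP 5 5 * (AP 5 4 * AP 5 1) * (AP 5 1 * AP 5 4)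

theorem APc {c m L : ℕ} (h : L ≤ m) : Cg L (AP 5 c) (fp 5 c m) := (AP_cg (by norm_num) m).mono h

theorem K1C1 {m u L : ℕ} (h : L ≤ m) (h' : L ≤ u) : Cg L (K1 * (C1 m u)⁻¹) 1 := by
  refine Cg.inv_right ?_ (cc_C1 m u)
  exact (((APc h).mul (APc h')).mul ((APc h).mul (APc (by omega)))).mul ((APc h).mul (APc (by omega)))
theorem K1C2 {m u L : ℕ} (h : L ≤ m) (h' : L ≤ u) : Cg L (K1 * (C2 m u)⁻¹) 1 := by
  refine Cg.inv_right ?_ (cc_C2 m u)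
  have e : K1 = AP 5 5 * AP 5 5 * (AP 5 2 * AP 5 3) * (AP 5 1 * AP 5 4) := by unfold K1; ring
  rw [e]
  exact (((APc h).mul (APc h')).mul ((APc (by omega)).mul (APc (by omega)))).mul
    ((APc (by omega)).mul (APc (by omega)))
theorem K3C3 {m u L : ℕ} (h : L ≤ m) (h' : L ≤ u) : Cg L (K3 * (C3 m u)⁻¹) 1 := by
  refine Cg.inv_right ?_ (cc_C3 m u)
  exact (((APc h).mul (APc h')).mul ((APc (by omega)).mul (APc (by omega)))).mul
    ((APc (by omega)).mul (APc (by omega)))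

theorem piece {K C f : PS} {e L M : ℕ} (hKC : Cg L (K * C⁻¹) 1) (hM : M ≤ e + L) :
    Cg M (X ^ e * f * (K * C⁻¹)) (X ^ e * f) := by
  have := Cg.shift (k := X ^ e * f) (Dvd.intro _ rfl) hKC hM
  rwa [mul_one] at this

theorem tpn_cg {n i : ℕ} (h : i < n) : Cg (n - 1)
    (K1 * K3 * ((-1) ^ i * (tp i (n + i) (n - 1 - i) + tn i (n - 1 - i) (n + i))))
    (K3 * s3t i - X * (K1 * s4t i)) := by
  have hl := le_tr i
  unfold tp tn s3t s4t
  have a1 := piece (K := K1) (C := C1 (n + i) (n - 1 - i)) (f := iv (5 * i + 1)) (e := 15 * tr i - 3 * i)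
    (M := n - 1) (K1C1 (L := n - 1 - i) (by omega) (by omega)) (by omega)
  have a2 := piece (K := K1) (C := C2 (n + i) (n - 1 - i)) (f := iv (5 * i + 3)) (e := 15 * tr i + 3 * i + 3)
    (M := n - 1) (K1C2 (L := n - 1 - i) (by omega) (by omega)) (by omega)
  have a3 := piece (K := K3) (C := C3 (n + i) (n - 1 - i)) (f := iv (5 * i + 2)) (e := 15 * tr i)
    (M := n - 1) (K3C3 (L := n - 1 - i) (by omega) (by omega)) (by omega)
  have b1 := piece (K := K1) (C := C1 (n - 1 - i) (n + i)) (f := iv (5 * i + 4)) (e := 15 * tr i + 8 * i + 7)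
    (M := n - 1) (K1C1 (L := n - 1 - i) (by omega) (by omega)) (by omega)
  have b2 := piece (K := K1) (C := C2 (n - 1 - i) (n + i)) (f := iv (5 * i + 2)) (e := 15 * tr i + 2 * i + 2)
    (M := n - 1) (K1C2 (L := n - 1 - i) (by omega) (by omega)) (by omega)
  have b3 := piece (K := K3) (C := C3 (n - 1 - i) (n + i)) (f := iv (5 * i + 3)) (e := 15 * tr i + 5 * i + 3)
    (M := n - 1) (K3C3 (L := n - 1 - i) (by omega) (by omega)) (by omega)
  have c := (((a1.add b2).add a2).add b1).mul_left (K3 * (-1) ^ i)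
  have d := (a3.add b3).mul_left (X * K1 * (-1) ^ i)
  have := c.sub d
  convert this using 1 <;> ring

theorem Kid0 : K1 * K3 = (AP 5 4 * AP 5 1 * (AP 5 3 * AP 5 2) ^ 2) *
    (K3 * psum s3t - X * (K1 * psum s4t)) := by
  refine eq_of_cg fun L => ?_
  have h := Kps (L + 1) (by omega)
  have h1 : K1 * K3 = (fp 5 4 (L + 1) * fp 5 1 (L + 1) * (fp 5 3 (L + 1) * fp 5 2 (L + 1)) ^ 2) *
    ∑ i ∈ range (L + 1), K1 * K3 * ((-1) ^ i * (tp i (L + 1 + i) (L + 1 - 1 - i) +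
      tn i (L + 1 - 1 - i) (L + 1 + i))) := by
    rw [← Finset.mul_sum]
    linear_combination (K1 * K3) * h
  have h2 : Cg L (∑ i ∈ range (L + 1), K1 * K3 * ((-1) ^ i * (tp i (L + 1 + i) (L + 1 - 1 - i) +
      tn i (L + 1 - 1 - i) (L + 1 + i)))) (∑ i ∈ range (L + 1), (K3 * s3t i - X * (K1 * s4t i))) :=
    Cg.sum _ fun i hi => tpn_cg (Finset.mem_range.1 hi)
  have h2' : ∑ i ∈ range (L + 1), (K3 * s3t i - X * (K1 * s4t i)) =
      K3 * ∑ i ∈ range (L + 1), s3t i - X * (K1 * ∑ i ∈ range (L + 1), s4t i) := by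
    simp only [Finset.mul_sum, Finset.sum_sub_distrib]
  rw [h2'] at h2
  have h3 := psum_cg s3t_dvd (show L ≤ L + 1 by omega)
  have h4 := psum_cg s4t_dvd (show L ≤ L + 1 by omega)
  have h5 := (h3.mul_left K3).sub ((h4.mul_left K1).mul_left X)
  have h6 := h2.trans h5.symm
  have hf : Cg L (fp 5 4 (L + 1) * fp 5 1 (L + 1) * (fp 5 3 (L + 1) * fp 5 2 (L + 1)) ^ 2)
      (AP 5 4 * AP 5 1 * (AP 5 3 * AP 5 2) ^ 2) :=
    (((APc (by omega)).mul (APc (by omega))).mul (((APc (by omega)).mul (APc (by omega))).pow 2)).symm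
  conv_lhs => rw [h1]
  exact hf.mul h6

noncomputable def T1 : PS := AP 5 1 * AP 5 4 * AP 5 5
noncomputable def T2 : PS := AP 5 2 * AP 5 3 * AP 5 5

theorem AP_ne (d c : ℕ) (hc : c ≠ 0) : AP d c ≠ 0 := ne_zero_of_cc (cc_AP hc)

theorem Kid : AP 5 5 ^ 3 * T1 = - X * T2 ^ 2 * psum s4t + T1 * T2 * psum s3t := by
  have h := Kid0
  have hne : AP 5 1 ^ 2 * AP 5 4 ^ 2 * AP 5 2 * AP 5 3 ≠ 0 := by
    simp [AP_ne]
  apply mul_left_cancel₀ hne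
  unfold T1 T2
  unfold K1 K3 at h
  linear_combination h

end Eta4

namespace Eta4

def gb {R : Type*} [CommRing R] (q : R) : ℕ → ℕ → R
  | _, 0 => 1
  | 0, _ + 1 => 0
  | N + 1, k + 1 => gb q N k + q ^ (k + 1) * gb q N (k + 1)

section gbs
variable {R : Type*} [CommRing R] (q : R)

theorem gb_zero (N : ℕ) : gb q N 0 = 1 := by cases N <;> rfl
theorem gb_succ (N k : ℕ) : gb q (N + 1) (k + 1) = gb q N k + q ^ (k + 1) * gb q N (k + 1) := rfl
theorem gb_gt (N k : ℕ) (h : N < k) : gb q N k = 0 := by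
  induction N generalizing k with
  | zero => cases k with
    | zero => omega
    | succ k => rfl
  | succ N ih => cases k with
    | zero => omega
    | succ k => rw [gb_succ, ih k (by omega), ih (k + 1) (by omega)]; simp

theorem gb_succ2 (N k m : ℕ) (h : k + m = N) :
    gb q (N + 1) (k + 1) = q ^ m * gb q N k + gb q N (k + 1) := by
  induction N generalizing k m with
  | zero =>
    obtain rfl : k = 0 := by omega
    obtain rfl : m = 0 := by omega
    simp [gb]
  | succ N ih =>
    cases k with
    | zero =>
      obtain rfl : m = N + 1 := by omega
      have := ih 0 N (by omega)
      rw [gb_succ, gb_zero] at this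
      rw [gb_succ, gb_succ q N 0, gb_zero, gb_zero]
      linear_combination q * this
    | succ k =>
      rw [gb_succ, gb_succ q N k, gb_succ q N (k + 1)]
      cases m with
      | zero =>
        obtain rfl : k = N := by omega
        rw [gb_gt q k (k + 1) (by omega), gb_gt q k (k + 1 + 1) (by omega)]
        simp
      | succ m =>
        have h1 := ih k (m + 1) (by omega)
        have h2 := ih (k + 1) m (by omega)
        rw [gb_succ] at h1 h2
        linear_combination h1 + q ^ (k + 2) * h2
end gbs

def el (j : ℤ) : ℕ := (j * (j - 1) / 2).toNat
theorem two_el (j : ℤ) : 2 * (el j : ℤ) = j * (j - 1) := by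
  have h1 : Even (j * (j - 1)) := Int.even_mul_pred_self j
  have h2 : 0 ≤ j * (j - 1) := by
    rcases le_or_gt j 0 with h | h
    · nlinarith
    · nlinarith
  obtain ⟨r, hr⟩ := h1
  rw [el, hr]
  omega

theorem fin_jtp0 {R : Type*} [CommRing R] (q Y : R) (b : ℕ) :
    ∏ i ∈ range b, (1 - Y * q ^ i) =
      ∑ k ∈ range (b + 1), (-1) ^ k * q ^ el k * gb q b k * Y ^ k := by
  induction b with
  | zero => simp [el, gb]
  | succ b ih =>
    rw [prod_range_succ, ih, sum_range_succ' _ (b + 1)]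
    rw [mul_sub, mul_one, sum_range_succ' _ b]
    have h2 : ∑ k ∈ range (b + 1), (-1) ^ (k + 1) * q ^ el ((k + 1 : ℕ) : ℤ) * gb q (b + 1) (k + 1) * Y ^ (k + 1)
       = ∑ k ∈ range b, (-1) ^ (k + 1) * q ^ el ((k + 1 : ℕ) : ℤ) * gb q b (k + 1) * Y ^ (k + 1)
        - ∑ k ∈ range (b + 1), (-1) ^ k * q ^ el k * gb q b k * Y ^ k * (Y * q ^ b) := by
      have : ∑ k ∈ range b, (-1) ^ (k + 1) * q ^ el ((k + 1 : ℕ) : ℤ) * gb q b (k + 1) * Y ^ (k + 1)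
        = ∑ k ∈ range (b + 1), (-1) ^ (k + 1) * q ^ el ((k + 1 : ℕ) : ℤ) * gb q b (k + 1) * Y ^ (k + 1) := by
        rw [sum_range_succ _ b, gb_gt q b (b + 1) (by omega)]; simp
      rw [this, ← sum_sub_distrib]
      refine sum_congr rfl fun k hk => ?_
      have hk' := mem_range.1 hk
      rw [gb_succ2 q b k (b - k) (by omega)]
      have e1 : el ((k + 1 : ℕ) : ℤ) = el k + k := by
        have := two_el ((k + 1 : ℕ) : ℤ); have := two_el (k : ℤ); push_cast at *; grind
      have e2 : q ^ b = q ^ k * q ^ (b - k) := by rw [← pow_add]; congr 1; omega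
      rw [e1, e2]; ring
    rw [h2, ← sum_range_succ' (fun k => (-1) ^ k * q ^ el (k : ℤ) * gb q b k * Y ^ k) b, ← sum_mul]
    rw [sum_range_succ' _ b]
    simp only [gb_zero]
    ring

theorem fin_jtp {R : Type*} [CommRing R] (q Y : R) (a b : ℕ) :
    (∏ i ∈ range a, (q ^ (i + 1) - Y)) * ∏ i ∈ range b, (1 - Y * q ^ i) =
      ∑ k ∈ range (a + b + 1), (-1) ^ k * q ^ el ((k : ℤ) - a) * gb q (a + b) k * Y ^ k := by
  induction a with
  | zero => simpa using fin_jtp0 q Y b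
  | succ a ih =>
    have h0 : (∏ i ∈ range (a + 1), (q ^ (i + 1) - Y)) * ∏ i ∈ range b, (1 - Y * q ^ i) =
      (q ^ (a + 1) - Y) * ((∏ i ∈ range a, (q ^ (i + 1) - Y)) * ∏ i ∈ range b, (1 - Y * q ^ i)) := by
      rw [prod_range_succ]; ring
    rw [h0, ih, show a + 1 + b + 1 = (a + b + 1) + 1 by ring, show a + 1 + b = a + b + 1 by ring,
      sum_range_succ' _ (a + b + 1)]
    have e1 : ∀ k : ℕ, el ((k : ℤ) - a) + (a + 1) = el ((k : ℤ) - (a + 1 : ℕ)) + k := by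
      intro k
      have := two_el ((k : ℤ) - a); have := two_el ((k : ℤ) - (a + 1 : ℕ))
      push_cast at *; grind
    have key : q ^ (a + 1) * ∑ k ∈ range (a + b + 1), (-1) ^ k * q ^ el ((k : ℤ) - a) * gb q (a + b) k * Y ^ k
      = ∑ k ∈ range (a + b + 1), (-1) ^ (k + 1) * q ^ el ((k + 1 : ℕ) - ((a + 1 : ℕ) : ℤ))
          * (q ^ (k + 1) * gb q (a + b) (k + 1)) * Y ^ (k + 1)
        + (-1) ^ 0 * q ^ el ((0 : ℕ) - ((a + 1 : ℕ) : ℤ)) * gb q (a + b + 1) 0 * Y ^ 0 := by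
      have h3 : ∑ k ∈ range (a + b + 1), (-1) ^ (k + 1) * q ^ el ((k + 1 : ℕ) - ((a + 1 : ℕ) : ℤ))
          * (q ^ (k + 1) * gb q (a + b) (k + 1)) * Y ^ (k + 1) =
          ∑ k ∈ range (a + b), (-1) ^ (k + 1) * q ^ el ((k + 1 : ℕ) - ((a + 1 : ℕ) : ℤ))
          * (q ^ (k + 1) * gb q (a + b) (k + 1)) * Y ^ (k + 1) := by
        rw [sum_range_succ _ (a + b), gb_gt q (a + b) (a + b + 1) (by omega)]; simp
      rw [h3, mul_sum, sum_range_succ' _ (a + b)]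
      congr 1
      · refine sum_congr rfl fun k _ => ?_
        have := congrArg (fun e => q ^ e) (e1 (k + 1))
        simp only [pow_add q (el _)] at this
        linear_combination ((-1) ^ (k + 1) * gb q (a + b) (k + 1) * Y ^ (k + 1)) * this
      · have := congrArg (fun e => q ^ e) (e1 0)
        simp only [pow_add q (el _)] at this
        rw [gb_zero, gb_zero]
        linear_combination this
    rw [sub_mul, key, mul_sum]
    have : ∑ k ∈ range (a + b + 1), (-1) ^ (k + 1) * q ^ el ((k + 1 : ℕ) - ((a + 1 : ℕ) : ℤ)) * gb q (a + b + 1) (k + 1) * Y ^ (k + 1)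
      = ∑ k ∈ range (a + b + 1), (-1) ^ (k + 1) * q ^ el ((k + 1 : ℕ) - ((a + 1 : ℕ) : ℤ))
          * (q ^ (k + 1) * gb q (a + b) (k + 1)) * Y ^ (k + 1)
        - ∑ k ∈ range (a + b + 1), Y * ((-1) ^ k * q ^ el ((k : ℤ) - a) * gb q (a + b) k * Y ^ k) := by
      rw [← sum_sub_distrib]
      refine sum_congr rfl fun k _ => ?_
      rw [gb_succ, show (((k + 1 : ℕ) : ℤ) - ((a + 1 : ℕ) : ℤ)) = (k : ℤ) - a by push_cast; ring]
      ring
    rw [this]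
    ring

theorem gb_fp (d N m k : ℕ) (h : m + k = N) :
    gb ((X : PS) ^ d) N k * (fp d d k * fp d d m) = fp d d N := by
  induction N generalizing m k with
  | zero =>
    obtain rfl : k = 0 := by omega
    obtain rfl : m = 0 := by omega
    simp [gb_zero, fp_zero]
  | succ N ih =>
    cases k with
    | zero =>
      obtain rfl : m = N + 1 := by omega
      simp [gb_zero, fp_zero]
    | succ k =>
      rw [gb_succ]
      have h1 := ih m k (by omega)
      cases m with
      | zero =>
        obtain rfl : N = k := by omega
        rw [gb_gt _ N (N + 1) (by omega)]
        rw [fp_succ]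
        linear_combination (1 - X ^ (d * N + d)) * h1
      | succ m =>
        have h2 := ih m (k + 1) (by omega)
        rw [fp_succ d d N, fp_succ d d k, fp_succ d d m] at *
        obtain rfl : N = m + k + 1 := by omega
        have : (X : PS) ^ (d * (m + k + 1) + d) = (X ^ d) ^ (k + 1) * X ^ (d * m + d) := by
          rw [← pow_mul, ← pow_add]; congr 1; ring
        have h4 : (X : PS) ^ (d * k + d) = (X ^ d) ^ (k + 1) := by
          rw [← pow_mul]; congr 1
        rw [this]
        rw [h4] at *
        linear_combination (1 - (X ^ d) ^ (k + 1)) * h1 + (X ^ d) ^ (k + 1) * (1 - X ^ (d * m + d)) * h2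

theorem AP_gb {d N m k L : ℕ} (hd : 1 ≤ d) (h : m + k = N) (h1 : L ≤ m) (h2 : L ≤ k) :
    Cg L (AP d d * gb ((X : PS) ^ d) N k) 1 := by
  have e := gb_fp d N m k h
  have c : ∀ n, L ≤ n → Cg L (AP d d) (fp d d n) := fun n hn => (AP_cg hd n).mono hn
  have a1 := ((c k h2).mul (c m h1)).mul_left (gb ((X : PS) ^ d) N k)
  rw [e] at a1
  have a2 := a1.trans (c N (by omega)).symm
  have a3 := a2.mul_left (AP d d)⁻¹
  have h5 := inv_mul_of_cc (cc_AP (d := d) (c := d) (by omega))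
  rw [h5] at a3
  convert a3 using 1
  linear_combination (-AP d d * gb ((X : PS) ^ d) N k) * h5

end Eta4

namespace Eta4

def te (c : ℕ) (j : ℤ) : ℕ := (5 * (el j : ℤ) + c * j).toNat

theorem te_ge (c : ℕ) (hc : c = 3 ∨ c = 4) (j : ℤ) : |j| ≤ 5 * (el j : ℤ) + c * j := by
  have := two_el j
  rcases hc with rfl | rfl
  · rcases le_total 0 j with h | h
    · rw [abs_of_nonneg h]; push_cast; nlinarith
    · rw [abs_of_nonpos h]; push_cast
      rcases eq_or_lt_of_le h with h | h
      · subst h; omega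
      · have : j ≤ -1 := by omega
        nlinarith
  · rcases le_total 0 j with h | h
    · rw [abs_of_nonneg h]; push_cast; nlinarith
    · rw [abs_of_nonpos h]; push_cast
      rcases eq_or_lt_of_le h with h | h
      · subst h; omega
      · have : j ≤ -1 := by omega
        nlinarith

theorem te_eq (c : ℕ) (hc : c = 3 ∨ c = 4) (j : ℤ) : (te c j : ℤ) = 5 * (el j : ℤ) + c * j := by
  have := te_ge c hc j
  have := abs_nonneg j
  rw [te]; omega

noncomputable def th (c n : ℕ) : PS := ∑ k ∈ range (2 * n + 1), (-1) ^ (k + n) * X ^ te c ((k : ℤ) - n)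

theorem prod_neg (c c' n : ℕ) (h : c + c' = 5) :
    ∏ i ∈ range n, (((X : PS) ^ 5) ^ (i + 1) - X ^ c) = (-1) ^ n * X ^ (c * n) * fp 5 c' n := by
  have : ∀ i, (((X : PS) ^ 5) ^ (i + 1) - X ^ c) = (-X ^ c) * (1 - X ^ (5 * i + c')) := by
    intro i
    have : ((X : PS) ^ 5) ^ (i + 1) = X ^ c * X ^ (5 * i + c') := by
      rw [← pow_mul, ← pow_add]; congr 1; omega
    rw [this]; ring
  simp only [this, prod_mul_distrib, prod_const, card_range, fp]
  rw [neg_pow, pow_mul]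

theorem jtp_cg (c c' n : ℕ) (h : c + c' = 5) (hc : c = 3 ∨ c = 4) :
    Cg n (AP 5 c' * AP 5 c * AP 5 5) (th c n) := by
  have h0 := fin_jtp ((X : PS) ^ 5) (X ^ c) n n
  rw [prod_neg c c' n h] at h0
  have h1 : ∏ i ∈ range n, (1 - (X : PS) ^ c * (X ^ 5) ^ i) = fp 5 c n := by
    refine prod_congr rfl fun i _ => ?_
    rw [← pow_mul, ← pow_add, add_comm]
  rw [h1] at h0
  have h2 : Cg (c * n + n) (AP 5 5 * ∑ k ∈ range (n + n + 1), (-1) ^ k * ((X : PS) ^ 5) ^ el ((k : ℤ) - n) * gb (X ^ 5) (n + n) k * (X ^ c) ^ k)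
      (X ^ (c * n) * ∑ k ∈ range (n + n + 1), (-1) ^ k * X ^ te c ((k : ℤ) - n)) := by
    rw [mul_sum, mul_sum]
    refine Cg.sum _ fun k hk => ?_
    have hk' := mem_range.1 hk
    have g := te_ge c hc ((k : ℤ) - n)
    have t := te_eq c hc ((k : ℤ) - n)
    have g1 := neg_abs_le ((k : ℤ) - n)
    have g2 := le_abs_self ((k : ℤ) - n)
    have e : 5 * el ((k : ℤ) - n) + c * k = c * n + te c ((k : ℤ) - n) := by
      zify; rw [t]; ring
    have g4 : Cg (min k (n + n - k)) (AP 5 5 * gb ((X : PS) ^ 5) (n + n) k) 1 :=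
      AP_gb (m := n + n - k) (by norm_num) (by omega) (by omega) (by omega)
    have g5 := Cg.shift (k := (-1) ^ k * (X : PS) ^ (c * n + te c ((k : ℤ) - n))) (e := c * n + te c ((k : ℤ) - n))
      (M := c * n + n) (Dvd.intro_left _ rfl) g4 (by omega)
    convert g5 using 1
    · rw [← e, pow_add, pow_mul, pow_mul]; ring
    · rw [pow_add]; ring
  rw [← h0] at h2
  have h3 : Cg n (AP 5 5 * (fp 5 c' n * fp 5 c n)) (th c n) := by
    obtain ⟨r, hr⟩ := h2
    refine ⟨(-1) ^ n * r, ?_⟩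
    have hx : (X : PS) ^ (c * n) ≠ 0 := pow_ne_zero _ X_ne_zero
    apply mul_left_cancel₀ hx
    have hth : th c n = (-1) ^ n * ∑ k ∈ range (n + n + 1), (-1) ^ k * X ^ te c ((k : ℤ) - n) := by
      rw [th, mul_sum, two_mul]
      refine sum_congr rfl fun k _ => ?_
      ring
    rw [hth]
    have hs : ((-1 : PS) ^ n) * (-1) ^ n = 1 := by rw [← mul_pow]; simp
    rw [pow_add] at hr
    linear_combination (-1) ^ n * hr - X ^ (c * n) * AP 5 5 * (fp 5 c' n * fp 5 c n) * hs
  refine Cg.trans ?_ h3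
  have := ((APc (c := c') (le_refl n)).mul (APc (c := c) (le_refl n))).mul_left (AP 5 5)
  convert this using 1; ring

theorem T1_cg (n : ℕ) : Cg n T1 (th 4 n) := by
  simpa [T1] using jtp_cg 4 1 n rfl (by simp)
theorem T2_cg (n : ℕ) : Cg n T2 (th 3 n) := by
  simpa [T2] using jtp_cg 3 2 n rfl (by simp)

theorem jac_fin (n : ℕ) : (-1) ^ (n + 1 + 1) * (fp 1 1 (n + 1) * fp 1 1 n) =
    ∑ k ∈ range (n + 1 + (n + 1) + 1), (-1) ^ k * (X : PS) ^ el ((k : ℤ) - (n + 1 : ℕ)) * gb X (n + 1 + (n + 1)) k * (k : PS) := by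
  have h0 := fin_jtp (Polynomial.C (X : PS)) Polynomial.X (n + 1) (n + 1)
  have hgb : ∀ N k, gb (Polynomial.C (X : PS)) N k = Polynomial.C (gb (X : PS) N k) := by
    intro N
    induction N with
    | zero => intro k; cases k <;> simp [gb]
    | succ N ih => intro k; cases k with
      | zero => simp [gb]
      | succ k => simp [gb_succ, ih]
  rw [prod_range_succ' (fun i => 1 - Polynomial.X * Polynomial.C (X : PS) ^ i) n] at h0
  have h1 := congrArg (fun p => Polynomial.eval 1 (Polynomial.derivative p)) h0
  simp only [hgb] at h1
  have e : ∀ k : ℕ, (-1 : Polynomial PS) ^ k = Polynomial.C ((-1) ^ k) := by intro k; simp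
  simp only [e, ← Polynomial.C_pow, ← Polynomial.C_mul, Polynomial.derivative_sum, Polynomial.eval_finsetSum,
    Polynomial.derivative_C_mul_X_pow] at h1
  rw [← mul_assoc] at h1
  rw [Polynomial.derivative_mul] at h1
  simp only [Polynomial.eval_add, Polynomial.eval_mul, Polynomial.eval_sub, Polynomial.eval_one,
    Polynomial.eval_pow, Polynomial.eval_X, Polynomial.eval_C, Polynomial.derivative_sub, Polynomial.derivative_one,
    Polynomial.eval_prod, Polynomial.derivative_X, pow_zero, mul_one, sub_self, mul_zero, Polynomial.derivative_mul,
    one_pow, one_mul, zero_add, zero_sub, Polynomial.C_1, Polynomial.derivative_C] at h1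
  rw [← h1]
  have f1 : ∏ x ∈ range (n + 1), ((X : PS) ^ (x + 1) - 1) = (-1) ^ (n + 1) * fp 1 1 (n + 1) := by
    have : ∀ x : ℕ, (X : PS) ^ (x + 1) - 1 = (-1) * (1 - X ^ (1 * x + 1)) := by intro x; ring
    simp only [this, prod_mul_distrib, prod_const, card_range, fp]
  have f2 : ∏ x ∈ range n, (1 - (X : PS) ^ (x + 1)) = fp 1 1 n := by simp [fp]
  rw [f1, f2]
  simp
  ring

theorem jac_cg (n : ℕ) : Cg n (AP 1 1 ^ 3) (∑ k ∈ range (n + 1 + (n + 1) + 1), (-1) ^ (k + (n + 1) + 1) * (k : PS) *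
    X ^ el ((k : ℤ) - (n + 1 : ℕ))) := by
  have h0 := jac_fin n
  have h1 : Cg n (AP 1 1 * ∑ k ∈ range (n + 1 + (n + 1) + 1), (-1) ^ k * (X : PS) ^ el ((k : ℤ) - (n + 1 : ℕ)) * gb X (n + 1 + (n + 1)) k * (k : PS))
      (∑ k ∈ range (n + 1 + (n + 1) + 1), (-1) ^ k * (k : PS) * X ^ el ((k : ℤ) - (n + 1 : ℕ))) := by
    rw [mul_sum]
    refine Cg.sum _ fun k hk => ?_
    have hk' := mem_range.1 hk
    have g4 : Cg (min k (n + 1 + (n + 1) - k)) (AP 1 1 * gb ((X : PS) ^ 1) (n + 1 + (n + 1)) k) 1 :=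
      AP_gb (m := n + 1 + (n + 1) - k) (by norm_num) (by omega) (by omega) (by omega)
    rw [pow_one] at g4
    have t := two_el ((k : ℤ) - (n + 1 : ℕ))
    have b1 : (k : ℤ) - (n + 1 : ℕ) - 1 ≤ el ((k : ℤ) - (n + 1 : ℕ)) := by
      generalize (k : ℤ) - (n + 1 : ℕ) = j at *
      have : 0 ≤ (j - 1) * (j - 2) := by
        rcases le_or_gt j 1 with h | h
        · nlinarith
        · nlinarith
      nlinarith
    have b2 : -((k : ℤ) - (n + 1 : ℕ)) ≤ el ((k : ℤ) - (n + 1 : ℕ)) := by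
      generalize (k : ℤ) - (n + 1 : ℕ) = j at *
      have : 0 ≤ j * (j + 1) := by
        rcases le_or_gt 0 j with h | h
        · nlinarith
        · nlinarith
      nlinarith
    have g5 := Cg.shift (k := (-1) ^ k * (k : PS) * (X : PS) ^ (el ((k : ℤ) - (n + 1 : ℕ)))) (e := el ((k : ℤ) - (n + 1 : ℕ)))
      (M := n) (Dvd.intro_left _ rfl) g4 (by omega)
    convert g5 using 1
    · ring
    · ring
  rw [← h0] at h1
  have h2 := h1.mul_left ((-1) ^ (n + 1 + 1))
  have hs : ((-1 : PS) ^ (n + 1 + 1)) * (-1) ^ (n + 1 + 1) = 1 := by rw [← mul_pow]; simp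
  have a0 : ∀ m, n ≤ m → Cg n (AP 1 1) (fp 1 1 m) := fun m hm => (AP_cg (by norm_num) m).mono hm
  have h3 := ((a0 (n + 1) (by omega)).mul (a0 n le_rfl)).mul_left (AP 1 1)
  have h4 : Cg n (AP 1 1 ^ 3) (AP 1 1 * (fp 1 1 (n + 1) * fp 1 1 n)) := by
    convert h3 using 1; ring
  refine h4.trans ?_
  convert h2 using 1
  · linear_combination (-AP 1 1 * (fp 1 1 (n + 1) * fp 1 1 n)) * hs
  · rw [mul_sum]
    refine sum_congr rfl fun k _ => ?_
    ring

end Eta4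

namespace Eta4

theorem five0 : (5 : PS) = 0 := by
  have : ((5 : ℕ) : PS) = (PowerSeries.C : ZMod 5 →+* PS) (((5 : ℕ) : ZMod 5)) := (map_natCast _ 5).symm
  have h2 : ((5 : ℕ) : ZMod 5) = 0 := by decide
  rw [h2, map_zero] at this
  exact_mod_cast this

theorem sgn5 (i N r : ℕ) : (-1 : PS) ^ (5 * i + r + 5 * N + 1) = (-1) ^ (r + 1) * (-1) ^ (i + N) := by
  have : 5 * i + r + 5 * N + 1 = 2 * (2 * i + 2 * N) + ((r + 1) + (i + N)) := by ring
  rw [this, pow_add, pow_mul, pow_add _ (r + 1)]; simp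

noncomputable def zv (N : ℕ) (r : ℤ) (i : ℕ) : PS := (-1) ^ (i + N) * X ^ el (5 * ((i : ℤ) - N) + r)

theorem zv_refl (N : ℕ) (r s : ℤ) (h : r + s = 6) : ∑ i ∈ range (2 * N), zv N r i = - ∑ i ∈ range (2 * N), zv N s i := by
  rw [← sum_range_reflect, ← sum_neg_distrib]
  refine sum_congr rfl fun i hi => ?_
  have hi' := mem_range.1 hi
  unfold zv
  have e1 : el (5 * (((2 * N - 1 - i : ℕ) : ℤ) - N) + r) = el (5 * ((i : ℤ) - N) + s) := by
    have c : ((2 * N - 1 - i : ℕ) : ℤ) = 2 * N - 1 - i := by omega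
    have a := two_el (5 * (((2 * N - 1 - i : ℕ) : ℤ) - N) + r)
    have b := two_el (5 * ((i : ℤ) - N) + s)
    obtain rfl : r = 6 - s := by omega
    have : (2 * (el (5 * (((2 * N - 1 - i : ℕ) : ℤ) - N) + (6 - s))) : ℤ) = 2 * (el (5 * ((i : ℤ) - N) + s)) := by
      rw [a, b, c]; ring
    omega
  have e2 : (-1 : PS) ^ (2 * N - 1 - i + N) * (-1) ^ (i + N + 1) = 1 := by
    rw [← pow_add, show 2 * N - 1 - i + N + (i + N + 1) = 2 * (2 * N) by omega, pow_mul]; simp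
  have e3 : (-1 : PS) ^ (i + N) * (-1) ^ (i + N) = 1 := by rw [← mul_pow]; simp
  rw [e1]
  linear_combination (X ^ el (5 * ((i : ℤ) - N) + s) * (-(-1) ^ (i + N))) * e2 - (-1) ^ (2 * N - 1 - i + N) * X ^ el (5 * ((i : ℤ) - N) + s) * e3

theorem ex_th (N c : ℕ) (hc : c = 3 ∨ c = 4) (r : ℤ) (d : ℕ)
    (h : ∀ t : ℤ, el (5 * t + r) = d + 5 * te c t) :
    Cg (5 * N) (X ^ d * ex (th c N)) (∑ i ∈ range (2 * N), zv N r i) := by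
  have e : X ^ d * ex (th c N) = ∑ i ∈ range (2 * N + 1), zv N r i := by
    rw [th, map_sum, mul_sum]
    refine sum_congr rfl fun i _ => ?_
    simp only [map_mul, map_pow, ex_X, map_neg, map_one, zv, h]
    ring
  rw [e, sum_range_succ]
  have hl : Cg (5 * N) (zv N r (2 * N)) 0 := by
    apply Cg.of_dvd
    unfold zv
    rw [h]
    have g := te_ge c hc (((2 * N : ℕ) : ℤ) - N)
    have t := te_eq c hc (((2 * N : ℕ) : ℤ) - N)
    have g2 := le_abs_self (((2 * N : ℕ) : ℤ) - N)
    exact dvd_mul_of_dvd_right (pow_dvd_pow _ (by omega)) _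
  have := (Cg.refl (5 * N) (∑ i ∈ range (2 * N), zv N r i)).add hl
  simpa using this

theorem jac_group (N : ℕ) : ∑ k ∈ range (5 * (2 * N)), (-1) ^ (k + 5 * N + 1) * (k : PS) * X ^ el ((k : ℤ) - (5 * N : ℕ))
    = ∑ i ∈ range (2 * N), zv N 1 i + 2 * ∑ i ∈ range (2 * N), zv N 2 i := by
  rw [sum_range_five]
  have key : ∀ i r : ℕ, (-1) ^ (5 * i + r + 5 * N + 1) * ((5 * i + r : ℕ) : PS) * X ^ el (((5 * i + r : ℕ) : ℤ) - (5 * N : ℕ))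
      = (-1) ^ (r + 1) * (r : PS) * zv N r i := by
    intro i r
    rw [sgn5, zv]
    have : ((5 * i + r : ℕ) : ℤ) - (5 * N : ℕ) = 5 * ((i : ℤ) - N) + r := by push_cast; ring
    rw [this]; push_cast; rw [five0]; ring
  have k0 := fun i => key i 0
  have k1 := fun i => key i 1
  have k2 := fun i => key i 2
  have k3 := fun i => key i 3
  have k4 := fun i => key i 4
  simp only [add_zero] at k0
  simp only [k0, k1, k2, k3, k4, sum_add_distrib, ← mul_sum]
  have r4 := zv_refl N 4 2 (by norm_num)
  have r3 := zv_refl N 3 3 (by norm_num)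
  push_cast
  rw [r4]
  linear_combination (-1) * (∑ i ∈ range (2 * N), zv N 3 i) * five0 + 4 * r3

theorem jac5 : AP 1 1 ^ 3 = ex T2 + 2 * X * ex T1 := by
  refine eq_of_cg_large fun L => ⟨5 * L + 4, by omega, ?_⟩
  have h := jac_cg (5 * L + 4)
  rw [show 5 * L + 4 + 1 = 5 * (L + 1) by ring, ← two_mul, show 2 * (5 * (L + 1)) = 5 * (2 * (L + 1)) by ring, sum_range_succ] at h
  rw [jac_group] at h
  have hz : ((5 * (2 * (L + 1)) : ℕ) : PS) = 0 := by push_cast; rw [five0]; ring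
  rw [hz, mul_zero, zero_mul, add_zero] at h
  refine h.trans ?_
  have a1 := ex_th (L + 1) 3 (by simp) 1 0 (by
    intro t
    have a := two_el (5 * t + 1); have b := two_el t; have c := te_eq 3 (by simp) t
    push_cast at c; grind)
  have a2 := ex_th (L + 1) 4 (by simp) 2 1 (by
    intro t
    have a := two_el (5 * t + 2); have b := two_el t; have c := te_eq 4 (by simp) t
    push_cast at c; grind)
  have b1 := (T2_cg (L + 1)).expand.symm
  have b2 := ((T1_cg (L + 1)).expand.mul_left X).symm
  rw [pow_zero, one_mul] at a1
  rw [pow_one] at a2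
  have c1 := a1.symm.trans b1
  have c2 := (a2.symm.trans b2).mul_left 2
  have := (c1.add c2).mono (show 5 * L + 4 ≤ 5 * (L + 1) by omega)
  rw [← mul_assoc] at this
  exact this

end Eta4

namespace Eta4

noncomputable def U (r : ℕ) (f : PS) : PS := PowerSeries.mk fun n => coeff (5 * n + r) f

theorem U_add (r : ℕ) (f g : PS) : U r (f + g) = U r f + U r g := by ext n; simp [U]

theorem U_self (r : ℕ) (g : PS) : U r (X ^ r * ex g) = g := by
  ext n
  rw [U, coeff_mk, coeff_X_pow_mul', if_pos (by omega), Nat.add_sub_cancel]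
  exact coeff_expand_mul 5 (by norm_num) _ _

theorem U_ne (r s : ℕ) (hr : r < 5) (hs : s < 5) (h : r ≠ s) (g : PS) : U r (X ^ s * ex g) = 0 := by
  ext n
  rw [U, coeff_mk, coeff_X_pow_mul', map_zero]
  split_ifs with h1
  · exact coeff_expand_of_not_dvd 5 (by norm_num) _ (by omega)
  · rfl

noncomputable def ds (a b c d e : PS) : PS :=
  X ^ 0 * ex a + X ^ 1 * ex b + X ^ 2 * ex c + X ^ 3 * ex d + X ^ 4 * ex e

theorem U_ds (a b c d e : PS) : U 0 (ds a b c d e) = a ∧ U 1 (ds a b c d e) = b ∧ U 2 (ds a b c d e) = c ∧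
    U 3 (ds a b c d e) = d ∧ U 4 (ds a b c d e) = e := by
  simp only [ds, U_add, U_self]
  refine ⟨?_, ?_, ?_, ?_, ?_⟩
  · rw [U_ne 0 1, U_ne 0 2, U_ne 0 3, U_ne 0 4] <;> simp
  · rw [U_ne 1 0, U_ne 1 2, U_ne 1 3, U_ne 1 4] <;> simp
  · rw [U_ne 2 1, U_ne 2 0, U_ne 2 3, U_ne 2 4] <;> simp
  · rw [U_ne 3 1, U_ne 3 2, U_ne 3 0, U_ne 3 4] <;> simp
  · rw [U_ne 4 1, U_ne 4 2, U_ne 4 3, U_ne 4 0] <;> simp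

theorem ds_U (f : PS) : f = ds (U 0 f) (U 1 f) (U 2 f) (U 3 f) (U 4 f) := by
  obtain ⟨h0, h1, h2, h3, h4⟩ := U_ds (U 0 f) (U 1 f) (U 2 f) (U 3 f) (U 4 f)
  have key : ∀ r, r < 5 → U r (ds (U 0 f) (U 1 f) (U 2 f) (U 3 f) (U 4 f)) = U r f := by
    intro r hr
    interval_cases r <;> assumption
  generalize ds (U 0 f) (U 1 f) (U 2 f) (U 3 f) (U 4 f) = g at key
  ext n
  have := congrArg (coeff (n / 5)) (key (n % 5) (Nat.mod_lt _ (by norm_num)))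
  rw [U, U, coeff_mk, coeff_mk, Nat.div_add_mod] at this
  exact this.symm

theorem coeff_E_zero {n : ℕ} (h : ∀ k : ℤ, pentagonal k ≠ n) : coeff n (AP 1 1) = 0 := by
  rw [← penta_eq]
  exact coeff_pentagonalSeries_eq_zero _ (by rintro ⟨k, hk⟩; exact h k hk)

theorem penta_mod (k : ℤ) (n : ℕ) (h : pentagonal k = n) : n % 5 = 0 ∨ n % 5 = 2 ∨ (n % 5 = 1 ∧ k % 5 = 1) := by
  have h1 := two_mul_natCast_pentagonal k
  rw [h] at h1
  obtain ⟨m, r, hr0, hr5, rfl⟩ : ∃ m r : ℤ, 0 ≤ r ∧ r < 5 ∧ k = 5 * m + r := ⟨k / 5, k % 5, by omega, by omega, by omega⟩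
  have h2 : (2 * (n : ℤ)) = 5 * (15 * m ^ 2 + 6 * m * r - m) + r * (3 * r - 1) := by rw [h1]; ring
  generalize 15 * m ^ 2 + 6 * m * r - m = z at h2
  interval_cases r <;> omega

theorem E3 : U 3 (AP 1 1) = 0 := by
  ext n
  rw [U, coeff_mk, map_zero]
  refine coeff_E_zero fun k hk => ?_
  have := penta_mod k _ hk; omega
theorem E4 : U 4 (AP 1 1) = 0 := by
  ext n
  rw [U, coeff_mk, map_zero]
  refine coeff_E_zero fun k hk => ?_
  have := penta_mod k _ hk; omega

theorem penta_five (j : ℤ) : pentagonal (5 * j + 1) = 25 * pentagonal (-j) + 1 := by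
  have h1 := two_mul_natCast_pentagonal (5 * j + 1)
  have h2 := two_mul_natCast_pentagonal (-j)
  grind

theorem E1 : U 1 (AP 1 1) = - ex (AP 1 1) := by
  ext n
  rw [U, coeff_mk, map_neg]
  by_cases h : ∃ k : ℤ, pentagonal k = 5 * n + 1
  · obtain ⟨k, hk⟩ := h
    have hm := penta_mod k _ hk
    obtain ⟨j, rfl⟩ : ∃ j, k = 5 * j + 1 := ⟨k / 5, by omega⟩
    have h5 := penta_five j
    obtain rfl : n = 5 * pentagonal (-j) := by omega
    rw [← hk, coeff_expand_mul, ← penta_eq, coeff_pentagonalSeries_pentagonal, coeff_pentagonalSeries_pentagonal]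
    have : Int.negOnePow (5 * j + 1) = - Int.negOnePow (-j) := by
      rw [Int.negOnePow_add, Int.negOnePow_one, Int.negOnePow_neg, show 5 * j = 2 * (2 * j) + j by ring,
        Int.negOnePow_add, Int.negOnePow_two_mul]
      simp
    rw [this]; simp
  · push Not at h
    rw [coeff_E_zero h]
    by_cases hd : 5 ∣ n
    · obtain ⟨m, rfl⟩ := hd
      rw [coeff_expand_mul, coeff_E_zero, neg_zero]
      intro k hk
      refine h (5 * (-k) + 1) ?_
      rw [penta_five, neg_neg, hk]; ring
    · rw [coeff_expand_of_not_dvd 5 (by norm_num) _ hd, neg_zero]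

noncomputable def e0 : PS := U 0 (AP 1 1)
noncomputable def e1 : PS := U 1 (AP 1 1)
noncomputable def e2 : PS := U 2 (AP 1 1)

theorem E_ds : AP 1 1 = ex e0 + X * ex e1 + X ^ 2 * ex e2 := by
  have := ds_U (AP 1 1)
  rw [E3, E4] at this
  simpa [ds, e0, e1, e2] using this

theorem phi : AP 5 5 = ex (AP 1 1) := by
  have h := ex_AP (d := 1) (c := 1) le_rfl
  rw [mul_one] at h
  exact h.symm
theorem e1_eq : e1 = - AP 5 5 := by rw [phi]; exact E1

theorem e0_ne : e0 ≠ 0 := by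
  apply ne_zero_of_cc
  rw [← coeff_zero_eq_constantCoeff_apply, e0, U, coeff_mk, coeff_zero_eq_constantCoeff_apply, cc_AP (by norm_num)]

theorem rels : e0 ^ 3 + 3 * X * e1 * e2 ^ 2 = T2 ∧ 3 * e0 ^ 2 * e1 + X * e2 ^ 3 = 2 * T1 ∧
    3 * e0 ^ 2 * e2 + 3 * e0 * e1 ^ 2 = 0 := by
  have h := jac5
  rw [E_ds] at h
  have h2 : ds (e0 ^ 3 + 3 * X * e1 * e2 ^ 2) (3 * e0 ^ 2 * e1 + X * e2 ^ 3) (3 * e0 ^ 2 * e2 + 3 * e0 * e1 ^ 2)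
      (e1 ^ 3 + 6 * e0 * e1 * e2) (3 * e0 * e2 ^ 2 + 3 * e1 ^ 2 * e2) = ds T2 (2 * T1) 0 0 0 := by
    simp only [ds, map_add, map_mul, map_pow, ex_X, map_zero, map_ofNat]
    linear_combination h
  obtain ⟨a0, a1, a2, -, -⟩ := U_ds (e0 ^ 3 + 3 * X * e1 * e2 ^ 2) (3 * e0 ^ 2 * e1 + X * e2 ^ 3) (3 * e0 ^ 2 * e2 + 3 * e0 * e1 ^ 2)
      (e1 ^ 3 + 6 * e0 * e1 * e2) (3 * e0 * e2 ^ 2 + 3 * e1 ^ 2 * e2)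
  obtain ⟨b0, b1, b2, -, -⟩ := U_ds T2 (2 * T1) 0 0 0
  rw [h2] at a0 a1 a2
  exact ⟨a0.symm.trans b0, a1.symm.trans b1, a2.symm.trans b2⟩

theorem e0T1 : e0 * T1 = AP 5 5 * T2 := by
  obtain ⟨r0, r1, r2⟩ := rels
  have h5 := five0
  have h : e0 * e2 + e1 ^ 2 = 0 := by
    apply mul_left_cancel₀ e0_ne
    linear_combination 2 * r2 - e0 * (e0 * e2 + e1 ^ 2) * h5
  have hp : AP 5 5 = - e1 := by rw [e1_eq]; ring
  rw [hp]
  linear_combination (-e1) * r0 - 3 * e0 * r1 - (e0 * T1) * h5 + 3 * X * e2 ^ 2 * h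
    + (2 * e0 ^ 3 * e1) * h5 
  
theorem fp_frob (m : ℕ) : fp 1 1 m ^ 5 = ex (fp 1 1 m) := by
  simp only [fp, ← Finset.prod_pow, map_prod, map_sub, map_one, map_pow, ex_X]
  refine prod_congr rfl fun t _ => ?_
  rw [← pow_mul, mul_comm 5, pow_mul]
  generalize (X : PS) ^ (1 * t + 1) = y
  linear_combination (-y + 2 * y ^ 2 - 2 * y ^ 3 + y ^ 4) * five0

theorem Efrob : AP 1 1 ^ 5 = ex (AP 1 1) := by
  refine eq_of_cg fun L => ?_
  have h := AP_cg (d := 1) (c := 1) le_rfl L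
  have h1 := h.pow 5
  rw [fp_frob] at h1
  exact h1.trans (h.expand.mono (by omega)).symm

theorem E4_ds : AP 1 1 ^ 4 = ds (e0 * T2) (e1 * T2 + 2 * e0 * T1) (e2 * T2 + 2 * e1 * T1) (2 * e2 * T1) 0 := by
  have : AP 1 1 ^ 4 = AP 1 1 * AP 1 1 ^ 3 := by ring
  rw [this, jac5]
  conv_lhs => rw [E_ds]
  simp only [ds, map_add, map_mul, map_zero, map_ofNat]
  ring

noncomputable def BB : PS := U 4 aa

theorem BE : BB * AP 1 1 = - X * (e0 * T2) * psum s4t + (e1 * T2 + 2 * e0 * T1) * psum s3t := by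
  have h : aa * ex (AP 1 1) = SS * AP 1 1 ^ 4 := by
    rw [← aaE, ← Efrob]; ring
  rw [SS_diss, E4_ds] at h
  have h2 : ds (U 0 aa * AP 1 1) (U 1 aa * AP 1 1) (U 2 aa * AP 1 1) (U 3 aa * AP 1 1) (U 4 aa * AP 1 1)
      = ds (psum s0t * (e0 * T2) + X * psum s3t * (e2 * T2 + 2 * e1 * T1) - X ^ 2 * psum s4t * (e1 * T2 + 2 * e0 * T1))
       (psum s0t * (e1 * T2 + 2 * e0 * T1) + X * psum s3t * (2 * e2 * T1) - X ^ 2 * psum s4t * (e2 * T2 + 2 * e1 * T1))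
       (psum s0t * (e2 * T2 + 2 * e1 * T1) - X ^ 2 * psum s4t * (2 * e2 * T1))
       (psum s0t * (2 * e2 * T1) + psum s3t * (e0 * T2))
       (psum s3t * (e1 * T2 + 2 * e0 * T1) - X * psum s4t * (e0 * T2)) := by
    have h3 := ds_U aa
    have h4 : ds (U 0 aa * AP 1 1) (U 1 aa * AP 1 1) (U 2 aa * AP 1 1) (U 3 aa * AP 1 1) (U 4 aa * AP 1 1) = 
       ds (U 0 aa) (U 1 aa) (U 2 aa) (U 3 aa) (U 4 aa) * ex (AP 1 1) := by
      simp only [ds, map_mul]; ring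
    rw [h4, ← h3, h]
    simp only [ds, map_add, map_mul, map_sub, map_pow, ex_X, map_zero, map_ofNat]
    ring
  have a := (U_ds (U 0 aa * AP 1 1) (U 1 aa * AP 1 1) (U 2 aa * AP 1 1) (U 3 aa * AP 1 1) (U 4 aa * AP 1 1)).2.2.2.2
  rw [h2, (U_ds _ _ _ _ _).2.2.2.2] at a
  rw [BB, ← a]
  ring

theorem T1_ne : T1 ≠ 0 := by simp [T1, AP_ne]

theorem BE2 : BB * AP 1 1 = AP 5 5 ^ 4 := by
  apply mul_left_cancel₀ T1_ne
  have h := BE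
  have k := Kid
  have e := e0T1
  rw [e1_eq] at h
  linear_combination T1 * h - AP 5 5 * k + (- X * T2 * psum s4t + 2 * T1 * psum s3t) * e

theorem BB_eq : BB = ex (AP 1 1 ^ 3) * AP 1 1 ^ 4 := by
  apply mul_right_cancel₀ (AP_ne 1 1 (by norm_num))
  rw [BE2, phi, map_pow]
  linear_combination (-ex (AP 1 1) ^ 3) * Efrob

theorem aa_zero (n : ℕ) : coeff (25 * n + 24) aa = 0 := by
  have h1 : U 4 BB = 0 := by
    rw [BB_eq, E4_ds]
    have : ∀ f a b c d : PS, ex f * ds a b c d 0 = ds (f * a) (f * b) (f * c) (f * d) 0 := by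
      intro f a b c d
      simp only [ds, map_mul, map_zero]; ring
    rw [this, (U_ds _ _ _ _ _).2.2.2.2]
  have h2 := congrArg (coeff n) h1
  rw [U, coeff_mk, map_zero, BB, U, coeff_mk] at h2
  rw [← h2]; congr 1; ring

end Eta4

namespace Eta4

theorem choose_mod (x : ℤ) : ((intChoose x 4 : ℤ) : ZMod 5) = if x % 5 = 4 then 1 else 0 := by
  have h24 : (24 : ℤ) ∣ ∏ i ∈ Finset.range 4, (x - (i : ℤ)) := by
    have h8 : (8 : ℤ) ∣ ∏ i ∈ Finset.range 4, (x - (i : ℤ)) := by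
      rw [← Int.modEq_zero_iff_dvd]
      simp only [Finset.prod_range_succ, Finset.prod_range_zero, one_mul]
      refine (ZMod.intCast_eq_intCast_iff _ _ 8).1 ?_
      push_cast
      generalize (x : ZMod 8) = y
      revert y; decide
    have h3 : (3 : ℤ) ∣ ∏ i ∈ Finset.range 4, (x - (i : ℤ)) := by
      rw [← Int.modEq_zero_iff_dvd]
      simp only [Finset.prod_range_succ, Finset.prod_range_zero, one_mul]
      refine (ZMod.intCast_eq_intCast_iff _ _ 3).1 ?_
      push_cast
      generalize (x : ZMod 3) = y
      revert y; decide
    omega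
  obtain ⟨r, hr⟩ := h24
  have h1 : intChoose x 4 = r := by
    rw [intChoose, hr]
    simp [Nat.factorial]
  rw [h1]
  have h2 := congrArg (Int.cast : ℤ → ZMod 5) hr
  simp only [Finset.prod_range_succ, Finset.prod_range_zero, one_mul] at h2
  push_cast at h2
  have h3 : ((24 : ZMod 5)) = -1 := by decide
  rw [h3] at h2
  have h4 : (x % 5 = 4) ↔ (x : ZMod 5) = 4 := by
    rw [show (4 : ZMod 5) = ((4 : ℤ) : ZMod 5) by norm_num, ZMod.intCast_eq_intCast_iff, Int.ModEq]
    norm_num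
  simp only [h4]
  clear h4 hr h1 h3
  generalize (x : ZMod 5) = y at *
  generalize (r : ZMod 5) = z at *
  revert y z; decide

theorem eta_sum (n : ℕ) : eta4 n = ∑ p : n.Partition, intChoose (partitionRank p + 1) 4 := by
  have hc : ∀ m, rankCount m n = (univ.filter fun p : n.Partition => partitionRank p = m).card := by
    intro m
    rw [rankCount, Nat.card_eq_fintype_card, Fintype.card_subtype]
  rw [eta4, finsum_eq_sum_of_support_subset (s := univ.image (fun p : n.Partition => partitionRank p))]
  · rw [Finset.sum_comp (fun m => intChoose (m + 1) 4) (fun p : n.Partition => partitionRank p)]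
    refine Finset.sum_congr rfl fun m _ => ?_
    rw [hc, nsmul_eq_mul, mul_comm]
  · intro m hm
    rw [Function.mem_support, hc] at hm
    have : (univ.filter fun p : n.Partition => partitionRank p = m).card ≠ 0 := by
      intro h; rw [h] at hm; simp at hm
    obtain ⟨p, hp⟩ := Finset.card_ne_zero.1 this
    simp at hp
    simp only [Finset.coe_image, Finset.coe_univ, Set.image_univ, Set.mem_range]
    exact ⟨p, hp⟩

theorem eta_aa (n : ℕ) : ((eta4 n : ℤ) : ZMod 5) = coeff n aa := by
  rw [eta_sum, aa, coeff_mk]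
  push_cast
  simp only [choose_mod]
  rw [Finset.sum_boole]
  congr 2
  ext p
  simp
  omega

end Eta4

end Eta4Proof

/-- For every integer `n ≥ 0`, `η₄(25n+24) ≡ 0 (mod 5)`. -/
theorem eta4_25n_24_mod_5 (n : ℕ) : eta4 (25 * n + 24) ≡ 0 [ZMOD 5] := by
  have h := Eta4.eta_aa (25 * n + 24)
  rw [Eta4.aa_zero] at h
  exact (ZMod.intCast_eq_intCast_iff _ _ 5).1 (by rw [h]; simp)
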